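/- arXiv:2508.12113 — 3 statements merged into one kernel-verified Lean document; each statement's English description precedes it below -/
import Mathlib

section
/- Liaison Addition for general residuals: let K have characteristic zero and let A(fg) = A(f) ∪ A(g) ⊂ ℙⁿ be a hyperplane arrangement, where f = f₁⋯f_s and g = g₁⋯g_t are squarefree products of linear forms with fg squarefree, such that (i) the ideal (f_i, f_j, g) has height 3 whenever i ≠ j, and (ii) the ideal (f, g_i, g_j) has height 3 whenever i ≠ j. Then, for a general linear form ℓ, the general residuals with respect to ℓ satisfy: (a) r_{A(fg)} = r_{A(f)} ∩ r_{A(g)} ∩ (f, g); and (b) r_{A(fg)} = g·r_{A(f)} + f·r_{A(g)}. -/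
open MvPolynomial

/-- The derivative `∂f/∂ℓ = Σᵢ aᵢ·∂f/∂xᵢ` of `f` in the direction of the linear form
`ℓ = Σᵢ aᵢxᵢ` with coefficient vector `a`. -/
noncomputable def lderiv {K : Type*} [CommRing K] {m : ℕ} (a : Fin m → K)
    (f : MvPolynomial (Fin m) K) : MvPolynomial (Fin m) K :=
  ∑ i, a i • pderiv i f

/-- The Jacobian ideal of `f`, generated by all partial derivatives of `f`. -/
noncomputable def jacobianIdeal {K : Type*} [CommRing K] {m : ℕ}
    (f : MvPolynomial (Fin m) K) : Ideal (MvPolynomial (Fin m) K) :=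
  Ideal.span (Set.range fun i => pderiv i f)

/-- The general residual of the arrangement with defining polynomial `f` with respect to
the linear form with coefficient vector `a`: `r = (f, ∂f/∂ℓ) : Jac(f)`. -/
noncomputable def genResidual {K : Type*} [CommRing K] {m : ℕ} (a : Fin m → K)
    (f : MvPolynomial (Fin m) K) : Ideal (MvPolynomial (Fin m) K) :=
  (Ideal.span {f, lderiv a f}).colon (jacobianIdeal f)

/-- The height of an ideal `I` of a commutative ring: the infimum of the heights (in the
prime spectrum) of the prime ideals containing `I`. -/
noncomputable def idealHeight {R : Type*} [CommRing R] (I : Ideal R) : ℕ∞ :=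
  ⨅ (P : PrimeSpectrum R) (_ : I ≤ P.asIdeal), Order.height P


section Aux

/-- `l` is a nonzerodivisor modulo `I`. -/
def Nzd {R : Type*} [CommRing R] (l : R) (I : Ideal R) : Prop := ∀ x, l * x ∈ I → x ∈ I

lemma nzd_prod {R ι : Type*} [CommRing R] [DecidableEq ι] (l p : R) (g : ι → R) (s : Finset ι)
    (h1 : ∀ j ∈ s, Nzd (g j) (Ideal.span {p})) (h2 : ∀ j ∈ s, Nzd l (Ideal.span {p, g j})) :
    Nzd l (Ideal.span {p, ∏ j ∈ s, g j}) := by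
  induction s using Finset.induction_on with
  | empty =>
    intro x _
    rw [Ideal.mem_span_pair]
    exact ⟨0, x, by simp⟩
  | insert k s hk ih =>
    have ih := ih (fun j hj => h1 j (Finset.mem_insert_of_mem hj))
      (fun j hj => h2 j (Finset.mem_insert_of_mem hj))
    have h1 := h1 k (Finset.mem_insert_self _ _)
    have h2 := h2 k (Finset.mem_insert_self _ _)
    rw [Finset.prod_insert hk]
    set P := ∏ j ∈ s, g j
    intro x hx
    obtain ⟨a, b, hab⟩ := Ideal.mem_span_pair.1 hx
    obtain ⟨c, d, hcd⟩ := Ideal.mem_span_pair.1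
      (h2 x (Ideal.mem_span_pair.2 ⟨a, b * P, by rw [← hab]; ring⟩))
    obtain ⟨e, he⟩ := Ideal.mem_span_singleton'.1
      (h1 (l * d - b * P) (Ideal.mem_span_singleton'.2 ⟨a - l * c, by
        linear_combination hab - l * hcd⟩))
    obtain ⟨e', f', hef⟩ := Ideal.mem_span_pair.1
      (ih d (Ideal.mem_span_pair.2 ⟨e, b, by linear_combination he⟩))
    exact Ideal.mem_span_pair.2 ⟨c + e' * g k, f', by linear_combination hcd + g k * hef⟩

lemma mem_prod_span {R ι : Type*} [CommRing R] [DecidableEq ι] (u q : R) (F : ι → R) (s : Finset ι)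
    (h1 : ∀ j ∈ s, Nzd (F j) (Ideal.span {q}))
    (h2 : ∀ i ∈ s, ∀ j ∈ s, i ≠ j → Nzd (F i) (Ideal.span {q, F j}))
    (hu : ∀ j ∈ s, u ∈ Ideal.span {q, F j}) :
    u ∈ Ideal.span {q, ∏ j ∈ s, F j} := by
  induction s using Finset.induction_on with
  | empty => exact Ideal.mem_span_pair.2 ⟨0, u, by simp⟩
  | insert k s hk ih =>
    have hm : ∀ j ∈ s, j ∈ insert k s := fun j hj => Finset.mem_insert_of_mem hj
    have ih := ih (fun j hj => h1 j (hm j hj))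
      (fun i hi j hj => h2 i (hm i hi) j (hm j hj)) (fun j hj => hu j (hm j hj))
    have hn := nzd_prod (F k) q F s (fun j hj => h1 j (hm j hj))
      (fun j hj => h2 k (Finset.mem_insert_self _ _) j (hm j hj) (by rintro rfl; exact hk hj))
    rw [Finset.prod_insert hk]
    set P := ∏ j ∈ s, F j
    obtain ⟨a, b, hab⟩ := Ideal.mem_span_pair.1 (hu k (Finset.mem_insert_self _ _))
    obtain ⟨c, d, hcd⟩ := Ideal.mem_span_pair.1 ih
    obtain ⟨c', d', hcd'⟩ := Ideal.mem_span_pair.1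
      (hn b (Ideal.mem_span_pair.2 ⟨c - a, d, by linear_combination hcd - hab⟩))
    exact Ideal.mem_span_pair.2 ⟨a + c' * F k, d', by linear_combination hab + F k * hcd'⟩

lemma nzd_of_prod {R ι : Type*} [CommRing R] [DecidableEq ι] (I : Ideal R) (g : ι → R)
    (s : Finset ι) (h : ∀ j ∈ s, Nzd (g j) I) : Nzd (∏ j ∈ s, g j) I := by
  induction s using Finset.induction_on with
  | empty => intro x hx; simpa using hx
  | insert k s hk ih =>
    rw [Finset.prod_insert hk]
    intro x hx
    rw [mul_assoc] at hx
    exact ih (fun j hj => h j (Finset.mem_insert_of_mem hj)) x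
      (h k (Finset.mem_insert_self _ _) _ hx)

lemma prime_nzd {R : Type*} [CommRing R] {p l : R} (hp : Prime p) (h : ¬ p ∣ l) :
    Nzd l (Ideal.span {p}) := by
  intro x hx
  rw [Ideal.mem_span_singleton] at *
  exact (hp.dvd_or_dvd hx).resolve_left h

/-- a prime not dividing any factor is a nonzerodivisor modulo the product -/
lemma prime_nzd_prod {R ι : Type*} [CommRing R] [IsDomain R] [DecidableEq ι] {p : R}
    (hp : Prime p) (F : ι → R)
    (s : Finset ι) (h : ∀ j ∈ s, ¬ p ∣ F j) : Nzd p (Ideal.span {∏ j ∈ s, F j}) := by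
  intro x hx
  obtain ⟨c, hc⟩ := Ideal.mem_span_singleton'.1 hx
  have : p ∣ c * ∏ j ∈ s, F j := ⟨x, hc⟩
  rcases hp.dvd_or_dvd this with ⟨d, rfl⟩ | h'
  · refine Ideal.mem_span_singleton'.2 ⟨d, mul_left_cancel₀ hp.ne_zero ?_⟩
    rw [← hc]; ring
  · obtain ⟨j, hj, h'⟩ := (Prime.dvd_finsetProd_iff hp _).1 h'
    exact absurd h' (h j hj)

lemma nzd_deriv {R ι : Type*} [CommRing R] [IsDomain R] [DecidableEq ι] (D : R → R)
    (hD : ∀ x y, D (x * y) = D x * y + x * D y) (l : R) (F : ι → R) (s : Finset ι)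
    (hp : ∀ j ∈ s, Prime (F j)) (hu : ∀ j ∈ s, IsUnit (D (F j)))
    (hd : ∀ i ∈ s, ∀ j ∈ s, i ≠ j → ¬ F i ∣ F j)
    (hl : ∀ i ∈ s, ∀ j ∈ s, i ≠ j → Nzd l (Ideal.span {F i, F j})) :
    Nzd l (Ideal.span {∏ j ∈ s, F j, D (∏ j ∈ s, F j)}) := by
  induction s using Finset.induction_on with
  | empty => intro x _; exact Ideal.mem_span_pair.2 ⟨x, 0, by simp⟩
  | insert k s hk ih =>
    have hm : ∀ j ∈ s, j ∈ insert k s := fun j hj => Finset.mem_insert_of_mem hj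
    have hks : k ∈ insert k s := Finset.mem_insert_self _ _
    have hne : ∀ j ∈ s, k ≠ j := by rintro j hj rfl; exact hk hj
    have ih := ih (fun j hj => hp j (hm j hj)) (fun j hj => hu j (hm j hj))
      (fun i hi j hj => hd i (hm i hi) j (hm j hj)) (fun i hi j hj => hl i (hm i hi) j (hm j hj))
    have hA := nzd_prod l (F k) F s
      (fun j hj => prime_nzd (hp k hks) (hd k hks j (hm j hj) (hne j hj)))
      (fun j hj => hl k hks j (hm j hj) (hne j hj))
    have hB := prime_nzd_prod (hp k hks) F s (fun j hj => hd k hks j (hm j hj) (hne j hj))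
    have hkP : ¬ F k ∣ ∏ j ∈ s, F j := by
      rw [Prime.dvd_finsetProd_iff (hp k hks)]
      rintro ⟨j, hj, h⟩
      exact hd k hks j (hm j hj) (hne j hj) h
    have hpk := hp k hks
    obtain ⟨v, hv⟩ := (hu k hks).exists_left_inv
    rw [Finset.prod_insert hk, hD]
    set P := ∏ j ∈ s, F j
    set c := D (F k)
    set f := F k
    set P' := D P
    have hC : Nzd l (Ideal.span {P, f * P'}) := by
      intro y hy
      obtain ⟨a, b, hab⟩ := Ideal.mem_span_pair.1 hy
      obtain ⟨q, p, hqp⟩ := Ideal.mem_span_pair.1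
        (hA y (Ideal.mem_span_pair.2 ⟨b * P', a, by linear_combination hab⟩))
      obtain ⟨r, hr⟩ := Ideal.mem_span_singleton'.1
        (hB (l * q - b * P') (Ideal.mem_span_singleton'.2 ⟨a - l * p, by
          linear_combination hab - l * hqp⟩))
      obtain ⟨r1, r2, hr12⟩ := Ideal.mem_span_pair.1
        (ih q (Ideal.mem_span_pair.2 ⟨r, b, by linear_combination hr⟩))
      exact Ideal.mem_span_pair.2 ⟨p + f * r1, r2, by linear_combination hqp + f * hr12⟩
    intro x hx
    obtain ⟨A, B, hAB⟩ := Ideal.mem_span_pair.1 hx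
    obtain ⟨a0, b0, hab⟩ := Ideal.mem_span_pair.1
      (hA x (Ideal.mem_span_pair.2 ⟨A * P + B * P', B * c, by linear_combination hAB⟩))
    obtain ⟨al, hal⟩ : ∃ al, al = a0 - b0 * v * P' := ⟨_, rfl⟩
    have hx2 : x = al * f + b0 * v * (c * P + f * P') := by
      rw [hal]; linear_combination -hab - b0 * P * hv
    have h3 : f ∣ (B - l * b0 * v) * (c * P) :=
      ⟨l * al - A * P - (B - l * b0 * v) * P', by
        linear_combination hAB + l * hx2⟩
    have h4 : f ∣ B - l * b0 * v := by
      rcases hpk.dvd_or_dvd h3 with h | h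
      · exact h
      · rcases hpk.dvd_or_dvd h with h | h
        · exact absurd (isUnit_of_dvd_unit h (hu k hks)) hpk.not_isUnit
        · exact absurd h hkP
    obtain ⟨B', hB'⟩ := h4
    have h5 : l * al = (A + B' * c) * P + B' * (f * P') := by
      apply mul_left_cancel₀ hpk.ne_zero
      linear_combination - hAB - l * hx2 + (c * P + f * P') * hB'
    obtain ⟨m1, m2, hm12⟩ := Ideal.mem_span_pair.1
      (hC al (Ideal.mem_span_pair.2 ⟨A + B' * c, B', h5.symm⟩))
    refine Ideal.mem_span_pair.2 ⟨m1 - m2 * c, m2 * f + b0 * v, ?_⟩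
    rw [hx2]
    linear_combination f * hm12

end Aux

section Linear
variable {K : Type*} [Field K] {m : ℕ}

lemma lderiv_mul (a : Fin m → K) (x y : MvPolynomial (Fin m) K) :
    lderiv a (x * y) = lderiv a x * y + x * lderiv a y := by
  simp only [lderiv, Derivation.leibniz, smul_eq_mul, smul_add, Finset.sum_add_distrib,
    Finset.sum_mul, Finset.mul_sum]
  rw [add_comm]
  congr 1 <;> refine Finset.sum_congr rfl fun i _ => ?_
  · rw [smul_mul_assoc, mul_comm]
  · rw [mul_smul_comm]

lemma lin_pderiv {p : MvPolynomial (Fin m) K} (hp : p.IsHomogeneous 1) (i : Fin m) :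
    ∃ c : K, pderiv i p = C c := by
  have := hp.pderiv (i := i)
  rw [Nat.sub_self, ← totalDegree_zero_iff_isHomogeneous, totalDegree_eq_zero_iff_eq_C] at this
  exact ⟨_, this⟩

lemma lin_eq {p : MvPolynomial (Fin m) K} (hp : p.IsHomogeneous 1) :
    ∃ c : Fin m → K, (∀ i, pderiv i p = C (c i)) ∧ p = ∑ i, C (c i) * X i := by
  choose c hc using lin_pderiv hp
  refine ⟨c, hc, ?_⟩
  have := hp.sum_X_mul_pderiv
  rw [one_smul] at this
  exact this.symm.trans (Finset.sum_congr rfl fun i _ => by rw [← hc, mul_comm])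

lemma lin_lderiv {p : MvPolynomial (Fin m) K} (hp : p.IsHomogeneous 1) (a : Fin m → K) :
    lderiv a p = C (eval a p) := by
  obtain ⟨c, hc, hpe⟩ := lin_eq hp
  have : eval a p = ∑ i, c i * a i := by rw [hpe]; simp
  rw [this, lderiv, map_sum]
  exact Finset.sum_congr rfl fun i _ => by rw [hc, smul_eq_C_mul, ← C_mul, mul_comm]

lemma lin_proj {p : MvPolynomial (Fin m) K} (hp : p.IsHomogeneous 1) (h0 : p ≠ 0) :
    ∃ φ : MvPolynomial (Fin m) K →ₐ[K] MvPolynomial (Fin m) K,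
      φ p = 0 ∧ (∀ x, x - φ x ∈ Ideal.span {p}) ∧
      ∀ q : MvPolynomial (Fin m) K, q.IsHomogeneous 1 → (φ q).IsHomogeneous 1 := by
  obtain ⟨c, hc, hpe⟩ := lin_eq hp
  obtain ⟨i, hi⟩ : ∃ i, c i ≠ 0 := by
    by_contra! h
    exact h0 (by rw [hpe]; simp [h])
  let φ : MvPolynomial (Fin m) K →ₐ[K] MvPolynomial (Fin m) K :=
    aeval fun j => if j = i then X i - C (c i)⁻¹ * p else X j
  have hX : ∀ j, φ (X j) = if j = i then X i - C (c i)⁻¹ * p else X j := fun j => by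
    simp [φ]
  have hC : ∀ r, φ (C r) = C r := fun r => by simp [φ]
  refine ⟨φ, ?_, ?_, ?_⟩
  · have h1 : φ p - p = - p := by
      conv_lhs => rw [hpe]
      rw [map_sum, ← Finset.sum_sub_distrib, Finset.sum_eq_single i]
      · rw [map_mul, hC, hX, if_pos rfl]
        have : (C (c i) * C (c i)⁻¹ : MvPolynomial (Fin m) K) = 1 := by
          rw [← C_mul, mul_inv_cancel₀ hi, C_1]
        linear_combination -p * this
      · intro j _ hj
        rw [map_mul, hC, hX, if_neg hj, sub_self]
      · simp
    linear_combination h1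
  · intro x
    rw [← Ideal.Quotient.eq]
    have : (Ideal.Quotient.mkₐ K (Ideal.span {p})) =
        (Ideal.Quotient.mkₐ K (Ideal.span {p})).comp φ := by
      apply MvPolynomial.algHom_ext
      intro j
      rw [AlgHom.comp_apply, hX]
      split_ifs with h
      · subst h
        simp only [Ideal.Quotient.mkₐ_eq_mk]
        rw [Ideal.Quotient.eq, Ideal.mem_span_singleton']
        exact ⟨C (c j)⁻¹, by ring⟩
      · rfl
    exact congrArg (fun f => f x) this
  · intro q hq
    obtain ⟨d, -, hqe⟩ := lin_eq hq
    rw [hqe, map_sum]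
    apply IsHomogeneous.sum
    intro j _
    rw [map_mul, hC, hX]
    have : (if j = i then X i - C (c i)⁻¹ * p else X j : MvPolynomial (Fin m) K).IsHomogeneous 1 := by
      split_ifs
      · exact (isHomogeneous_X _ _).sub (by simpa using (isHomogeneous_C _ (c i)⁻¹).mul hp)
      · exact isHomogeneous_X _ _
    simpa using (isHomogeneous_C _ (d j)).mul this

lemma lin_ker {p : MvPolynomial (Fin m) K} {φ : MvPolynomial (Fin m) K →ₐ[K] MvPolynomial (Fin m) K}
    (h1 : φ p = 0) (h2 : ∀ x, x - φ x ∈ Ideal.span {p}) (x) : p ∣ x ↔ φ x = 0 := by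
  constructor
  · rintro ⟨y, rfl⟩; rw [map_mul, h1, zero_mul]
  · intro h
    have := h2 x
    rwa [h, sub_zero, Ideal.mem_span_singleton] at this

lemma lin_prime {p : MvPolynomial (Fin m) K} (hp : p.IsHomogeneous 1) (h0 : p ≠ 0) : Prime p := by
  obtain ⟨φ, h1, h2, -⟩ := lin_proj hp h0
  have hk := lin_ker h1 h2
  refine ⟨h0, fun hu => ?_, fun x y h => ?_⟩
  · have := (hk 1).1 (isUnit_iff_dvd_one.1 hu)
    simp at this
  · rw [hk, map_mul] at h
    rw [hk, hk]
    exact mul_eq_zero.1 h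

lemma lin_not_dvd {p q : MvPolynomial (Fin m) K} (hp : p.IsHomogeneous 1) (hp0 : p ≠ 0)
    (hq : q.IsHomogeneous 1) (hq0 : q ≠ 0) (h : ∀ c : K, q ≠ c • p) : ¬ p ∣ q := by
  rintro ⟨r, rfl⟩
  have hr : r ≠ 0 := right_ne_zero_of_mul hq0
  have h1 := totalDegree_mul_of_isDomain hp0 hr
  rw [hq.totalDegree hq0, hp.totalDegree hp0] at h1
  have h2 : r.totalDegree = 0 := by omega
  rw [totalDegree_eq_zero_iff_eq_C] at h2
  apply h (coeff 0 r)
  rw [smul_eq_C_mul, ← h2, mul_comm]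

lemma lin_pair_prime {p q : MvPolynomial (Fin m) K} (hp : p.IsHomogeneous 1) (hp0 : p ≠ 0)
    (hq : q.IsHomogeneous 1) (hpq : ¬ p ∣ q) :
    (Ideal.span {p, q}).IsPrime := by
  obtain ⟨φ, h1, h2, h3⟩ := lin_proj hp hp0
  have hk := lin_ker h1 h2
  have hpr := lin_prime (h3 q hq) (fun h => hpq ((hk q).2 h))
  have key : Ideal.span {p, q} = (Ideal.span {φ q}).comap φ := by
    apply le_antisymm
    · rw [Ideal.span_le]
      rintro x (rfl | rfl)
      · simp [h1]
      · exact Ideal.mem_span_singleton_self _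
    · intro x hx
      rw [Ideal.mem_comap, Ideal.mem_span_singleton'] at hx
      obtain ⟨y, hy⟩ := hx
      obtain ⟨a, ha⟩ := Ideal.mem_span_singleton'.1 (h2 x)
      obtain ⟨b, hb⟩ := Ideal.mem_span_singleton'.1 (h2 q)
      exact Ideal.mem_span_pair.2 ⟨a - y * b, y, by linear_combination ha + hy - y * hb⟩
  rw [key]
  have : (Ideal.span {φ q}).IsPrime := (Ideal.span_singleton_prime hpr.ne_zero).2 hpr
  exact Ideal.comap_isPrime _ _

/-- height-3 hypotheses exclude membership -/
lemma not_le_pair {p q : MvPolynomial (Fin m) K} {I : Ideal (MvPolynomial (Fin m) K)}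
    (hI : idealHeight I = 3) (hpr : (Ideal.span {p, q}).IsPrime) : ¬ I ≤ Ideal.span {p, q} := by
  intro hle
  have h1 : idealHeight I ≤ Order.height (⟨_, hpr⟩ : PrimeSpectrum (MvPolynomial (Fin m) K)) :=
    iInf₂_le (⟨_, hpr⟩ : PrimeSpectrum (MvPolynomial (Fin m) K)) hle
  rw [← PrimeSpectrum.height_eq_orderHeight, hI] at h1
  have h2 : (Ideal.span {p, q}).height ≤ (({p, q} : Set (MvPolynomial (Fin m) K)).ncard : ℕ∞) := by
    apply Ideal.height_le_card_of_mem_minimalPrimes_span (Set.toFinite _)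
    rw [Ideal.minimalPrimes_eq_subsingleton_self]
    rfl
  have h3 : (3 : ℕ∞) ≤ 2 := h1.trans (h2.trans (by
    have := Set.ncard_insert_le p {q}
    rw [Set.ncard_singleton] at this
    exact_mod_cast this))
  exact absurd h3 (by decide)

lemma nzd_of_prime {R : Type*} [CommRing R] {I : Ideal R} (hI : I.IsPrime) {l : R} (hl : l ∉ I) :
    Nzd l I := fun _ hx => (hI.mem_or_mem hx).resolve_left hl

lemma mem_genResidual (a : Fin m → K) (f u : MvPolynomial (Fin m) K) :
    u ∈ genResidual a f ↔ ∀ i, u * pderiv i f ∈ Ideal.span {f, lderiv a f} := by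
  rw [genResidual, Submodule.mem_colon]
  constructor
  · intro h i
    exact h _ (Ideal.subset_span ⟨i, rfl⟩)
  · intro h x hx
    change x ∈ Ideal.span _ at hx
    induction hx using Submodule.span_induction with
    | mem x hx => obtain ⟨i, rfl⟩ := hx; exact h i
    | zero => simp
    | add x y _ _ hx hy => rw [smul_add]; exact Ideal.add_mem _ hx hy
    | smul r x _ hx => rw [smul_comm]; exact Ideal.mul_mem_left _ r hx

lemma nzd_genResidual (a : Fin m → K) {f g : MvPolynomial (Fin m) K}
    (h : Nzd g (Ideal.span {f, lderiv a f})) : Nzd g (genResidual a f) := by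
  intro x hx
  rw [mem_genResidual] at *
  intro i
  apply h
  rw [← mul_assoc]
  exact hx i

lemma mul_genResidual (a : Fin m → K) {f g u : MvPolynomial (Fin m) K}
    (h : u ∈ genResidual a f) : g * u ∈ genResidual a (f * g) := by
  rw [mem_genResidual] at *
  intro i
  obtain ⟨A, B, hAB⟩ := Ideal.mem_span_pair.1 (h i)
  rw [lderiv_mul, Derivation.leibniz, smul_eq_mul, smul_eq_mul]
  refine Ideal.mem_span_pair.2 ⟨A * g + u * pderiv i g - B * lderiv a g, B * g, ?_⟩
  linear_combination g * g * hAB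

/-- The key local data of an element of the residual of a product. -/
lemma residual_split (a : Fin m → K) {f g u : MvPolynomial (Fin m) K}
    (hf : Nzd g (Ideal.span {f})) (hg : Nzd f (Ideal.span {g}))
    (h : u ∈ genResidual a (f * g)) (i : Fin m) :
    ∃ B, f ∣ u * pderiv i f - B * lderiv a f ∧ g ∣ u * pderiv i g - B * lderiv a g := by
  rw [mem_genResidual] at h
  obtain ⟨A, B, hAB⟩ := Ideal.mem_span_pair.1 (h i)
  rw [lderiv_mul, Derivation.leibniz, smul_eq_mul, smul_eq_mul] at hAB
  refine ⟨B, ?_, ?_⟩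
  · rw [← Ideal.mem_span_singleton]
    apply hf
    refine Ideal.mem_span_singleton'.2 ⟨A * g + B * lderiv a g - u * pderiv i g, ?_⟩
    linear_combination hAB
  · rw [← Ideal.mem_span_singleton]
    apply hg
    refine Ideal.mem_span_singleton'.2 ⟨A * f + B * lderiv a f - u * pderiv i f, ?_⟩
    linear_combination hAB

lemma local_dvd (a : Fin m → K) {p P u B : MvPolynomial (Fin m) K} (hp : Prime p) (hP : ¬ p ∣ P)
    (i : Fin m) (h : p * P ∣ u * pderiv i (p * P) - B * lderiv a (p * P)) :
    p ∣ u * pderiv i p - B * lderiv a p := by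
  obtain ⟨c, hc⟩ := h
  rw [lderiv_mul, Derivation.leibniz, smul_eq_mul, smul_eq_mul] at hc
  have : p ∣ (u * pderiv i p - B * lderiv a p) * P :=
    ⟨P * c - u * pderiv i P + B * lderiv a P, by linear_combination hc⟩
  exact (hp.dvd_or_dvd this).resolve_right hP

end Linear

/-- **Liaison Addition for general residuals.**  Let `K` have
characteristic zero and let `A(fg) = A(f) ∪ A(g) ⊂ ℙⁿ` be a hyperplane arrangement, where
`f = f₁⋯f_s` and `g = g₁⋯g_t` are squarefree products of linear forms with `fg`
squarefree, such that (i) the ideal `(f_i, f_j, g)` has height 3 whenever `i ≠ j`, and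
(ii) the ideal `(f, g_i, g_j)` has height 3 whenever `i ≠ j`.  Then, for a general linear
form `ℓ`, the general residuals with respect to `ℓ` satisfy
(a) `r_{A(fg)} = r_{A(f)} ∩ r_{A(g)} ∩ (f, g)`, and
(b) `r_{A(fg)} = g·r_{A(f)} + f·r_{A(g)}`. -/
theorem stmt_15 {K : Type*} [Field K] [CharZero K] {n s t : ℕ} (hs : 1 ≤ s) (ht : 1 ≤ t)
    (F : Fin s → MvPolynomial (Fin (n + 1)) K)
    (G : Fin t → MvPolynomial (Fin (n + 1)) K)
    (hFhom : ∀ i, (F i).IsHomogeneous 1) (hFne : ∀ i, F i ≠ 0)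
    (hGhom : ∀ i, (G i).IsHomogeneous 1) (hGne : ∀ i, G i ≠ 0)
    (hFprop : ∀ i j, i ≠ j → ∀ c : K, F i ≠ c • F j)
    (hGprop : ∀ i j, i ≠ j → ∀ c : K, G i ≠ c • G j)
    (hFG : ∀ i j, ∀ c : K, F i ≠ c • G j)
    (hhtF : ∀ i j, i ≠ j →
      idealHeight (Ideal.span {F i, F j, ∏ k, G k}) = 3)
    (hhtG : ∀ i j, i ≠ j →
      idealHeight (Ideal.span {∏ k, F k, G i, G j}) = 3) :
    ∃ p : MvPolynomial (Fin (n + 1)) K, p ≠ 0 ∧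
      ∀ a : Fin (n + 1) → K, eval a p ≠ 0 →
        (genResidual a ((∏ k, F k) * ∏ k, G k) =
          genResidual a (∏ k, F k) ⊓ genResidual a (∏ k, G k) ⊓
            Ideal.span {∏ k, F k, ∏ k, G k}) ∧
        (genResidual a ((∏ k, F k) * ∏ k, G k) =
          Ideal.span {∏ k, G k} * genResidual a (∏ k, F k) ⊔
            Ideal.span {∏ k, F k} * genResidual a (∏ k, G k)) := by
  classical
  have hFpr := fun i => lin_prime (hFhom i) (hFne i)
  have hGpr := fun i => lin_prime (hGhom i) (hGne i)
  have hFF : ∀ i j, i ≠ j → ¬ F i ∣ F j := fun i j hij =>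
    lin_not_dvd (hFhom i) (hFne i) (hFhom j) (hFne j) (hFprop j i hij.symm)
  have hGG : ∀ i j, i ≠ j → ¬ G i ∣ G j := fun i j hij =>
    lin_not_dvd (hGhom i) (hGne i) (hGhom j) (hGne j) (hGprop j i hij.symm)
  have hGF : ∀ i j, ¬ G j ∣ F i := fun i j =>
    lin_not_dvd (hGhom j) (hGne j) (hFhom i) (hFne i) (hFG i j)
  have hFGd : ∀ i j, ¬ F i ∣ G j := fun i j h =>
    hGF i j ((hFpr i).associated_of_dvd (hGpr j) h).symm.dvd
  have hFFp : ∀ i j, i ≠ j → (Ideal.span {F i, F j}).IsPrime := fun i j hij =>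
    lin_pair_prime (hFhom i) (hFne i) (hFhom j) (hFF i j hij)
  have hGGp : ∀ i j, i ≠ j → (Ideal.span {G i, G j}).IsPrime := fun i j hij =>
    lin_pair_prime (hGhom i) (hGne i) (hGhom j) (hGG i j hij)
  have hFGp : ∀ i j, (Ideal.span {F i, G j}).IsPrime := fun i j =>
    lin_pair_prime (hFhom i) (hFne i) (hGhom j) (hFGd i j)
  -- no three of the relevant forms are dependent
  have n1 : ∀ i j k, i ≠ j → Nzd (G k) (Ideal.span {F i, F j}) := fun i j k hij => by
    refine nzd_of_prime (hFFp i j hij) fun hmem => not_le_pair (hhtF i j hij) (hFFp i j hij) ?_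
    rw [Ideal.span_le]
    rintro x (rfl | rfl | rfl)
    · exact Ideal.subset_span (by simp)
    · exact Ideal.subset_span (by simp)
    · exact Ideal.mem_of_dvd _ (Finset.dvd_prod_of_mem G (Finset.mem_univ k)) hmem
  have n2 : ∀ i j k, i ≠ j → Nzd (F k) (Ideal.span {G i, G j}) := fun i j k hij => by
    refine nzd_of_prime (hGGp i j hij) fun hmem => not_le_pair (hhtG i j hij) (hGGp i j hij) ?_
    rw [Ideal.span_le]
    rintro x (rfl | rfl | rfl)
    · exact Ideal.mem_of_dvd _ (Finset.dvd_prod_of_mem F (Finset.mem_univ k)) hmem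
    · exact Ideal.subset_span (by simp)
    · exact Ideal.subset_span (by simp)
  have n3 : ∀ i j k, i ≠ j → Nzd (F i) (Ideal.span {F j, G k}) := fun i j k hij => by
    refine nzd_of_prime (hFGp j k) fun hmem => not_le_pair (hhtF i j hij) (hFGp j k) ?_
    rw [Ideal.span_le]
    rintro x (rfl | rfl | rfl)
    · exact hmem
    · exact Ideal.subset_span (by simp)
    · exact Ideal.mem_of_dvd _ (Finset.dvd_prod_of_mem G (Finset.mem_univ k))
        (Ideal.subset_span (by simp))
  have n4 : ∀ i j k, i ≠ j → Nzd (G i) (Ideal.span {F k, G j}) := fun i j k hij => by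
    refine nzd_of_prime (hFGp k j) fun hmem => not_le_pair (hhtG i j hij) (hFGp k j) ?_
    rw [Ideal.span_le]
    rintro x (rfl | rfl | rfl)
    · exact Ideal.mem_of_dvd _ (Finset.dvd_prod_of_mem F (Finset.mem_univ k))
        (Ideal.subset_span (by simp))
    · exact hmem
    · exact Ideal.subset_span (by simp)
  have hFprodG : ∀ i, Nzd (F i) (Ideal.span {∏ k, G k}) := fun i =>
    prime_nzd_prod (hFpr i) G _ (fun j _ => hFGd i j)
  have hGprodF : ∀ i, Nzd (G i) (Ideal.span {∏ k, F k}) := fun i =>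
    prime_nzd_prod (hGpr i) F _ (fun j _ => hGF j i)
  -- (f, g) is the intersection of the (f_i, g_j)
  have hinter : ∀ u, (∀ i j, u ∈ Ideal.span {F i, G j}) →
      u ∈ Ideal.span {∏ k, F k, ∏ k, G k} := by
    intro u hu
    have st1 : ∀ i, u ∈ Ideal.span {F i, ∏ k, G k} := fun i =>
      mem_prod_span u (F i) G _ (fun j _ => prime_nzd (hFpr i) (hFGd i j))
        (fun j _ k _ hjk => n4 j k i hjk) (fun j _ => hu i j)
    rw [Set.pair_comm]
    refine mem_prod_span u _ F _ (fun j _ => hFprodG j) (fun i _ j _ hij => ?_) (fun j _ => ?_)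
    · rw [Set.pair_comm]
      exact nzd_prod (F i) (F j) G _ (fun k _ => prime_nzd (hFpr j) (hFGd j k))
        (fun k _ => n3 i j k hij)
    · rw [Set.pair_comm]; exact st1 j
  have hNGf : Nzd (∏ k, G k) (Ideal.span {∏ k, F k}) := nzd_of_prod _ G _ (fun j _ => hGprodF j)
  have hNFg : Nzd (∏ k, F k) (Ideal.span {∏ k, G k}) := nzd_of_prod _ F _ (fun j _ => hFprodG j)
  refine ⟨(∏ k, F k) * ∏ k, G k, mul_ne_zero (Finset.prod_ne_zero_iff.2 fun i _ => hFne i)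
    (Finset.prod_ne_zero_iff.2 fun i _ => hGne i), fun a ha => ?_⟩
  rw [map_mul, map_prod, map_prod, mul_ne_zero_iff, Finset.prod_ne_zero_iff,
    Finset.prod_ne_zero_iff] at ha
  have haF := fun i => ha.1 i (Finset.mem_univ i)
  have haG := fun i => ha.2 i (Finset.mem_univ i)
  have hNG : Nzd (∏ k, G k) (genResidual a (∏ k, F k)) := by
    refine nzd_genResidual a (nzd_of_prod _ G _ fun k _ => ?_)
    refine nzd_deriv (lderiv a) (lderiv_mul a) (G k) F _ (fun j _ => hFpr j) (fun j _ => ?_)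
      (fun i _ j _ => hFF i j) (fun i _ j _ => n1 i j k)
    rw [lin_lderiv (hFhom j)]
    exact (isUnit_iff_ne_zero.2 (haF j)).map C
  have hNF : Nzd (∏ k, F k) (genResidual a (∏ k, G k)) := by
    refine nzd_genResidual a (nzd_of_prod _ F _ fun k _ => ?_)
    refine nzd_deriv (lderiv a) (lderiv_mul a) (F k) G _ (fun j _ => hGpr j) (fun j _ => ?_)
      (fun i _ j _ => hGG i j) (fun i _ j _ => n2 i j k)
    rw [lin_lderiv (hGhom j)]
    exact (isUnit_iff_ne_zero.2 (haG j)).map C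
  -- first inclusion
  have i1 : genResidual a ((∏ k, F k) * ∏ k, G k) ≤
      genResidual a (∏ k, F k) ⊓ genResidual a (∏ k, G k) ⊓
        Ideal.span {∏ k, F k, ∏ k, G k} := by
    intro u hu
    have hsp := residual_split a hNGf hNFg hu
    refine ⟨⟨?_, ?_⟩, ?_⟩
    · refine (mem_genResidual _ _ _).2 fun i => ?_
      obtain ⟨B, ⟨c, hc⟩, -⟩ := hsp i
      exact Ideal.mem_span_pair.2 ⟨c, B, by linear_combination -hc⟩
    · refine (mem_genResidual _ _ _).2 fun i => ?_
      obtain ⟨B, -, ⟨c, hc⟩⟩ := hsp i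
      exact Ideal.mem_span_pair.2 ⟨c, B, by linear_combination -hc⟩
    · refine hinter u fun k j => ?_
      obtain ⟨c, hc, hFe⟩ := lin_eq (hFhom k)
      obtain ⟨d, hd, hGe⟩ := lin_eq (hGhom j)
      obtain ⟨i, hi⟩ : ∃ i, c i * eval a (G j) - d i * eval a (F k) ≠ 0 := by
        by_contra! h
        apply hFG k j (eval a (F k) / eval a (G j))
        generalize eval a (F k) = α at h ⊢
        have hg0 := haG j
        generalize eval a (G j) = β at h hg0 ⊢
        rw [hFe, hGe, smul_eq_C_mul, Finset.mul_sum]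
        refine Finset.sum_congr rfl fun i _ => ?_
        rw [← mul_assoc, ← C_mul]
        congr 2
        field_simp
        linear_combination h i
      obtain ⟨B, h1, h2⟩ := hsp i
      rw [← Finset.mul_prod_erase Finset.univ F (Finset.mem_univ k)] at h1
      rw [← Finset.mul_prod_erase Finset.univ G (Finset.mem_univ j)] at h2
      have h1 := local_dvd a (hFpr k) (by
        rw [Prime.dvd_finsetProd_iff (hFpr k)]
        rintro ⟨l, hl, hdv⟩
        exact hFF k l (Finset.ne_of_mem_erase hl).symm hdv) i h1
      have h2 := local_dvd a (hGpr j) (by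
        rw [Prime.dvd_finsetProd_iff (hGpr j)]
        rintro ⟨l, hl, hdv⟩
        exact hGG j l (Finset.ne_of_mem_erase hl).symm hdv) i h2
      rw [hc, lin_lderiv (hFhom k)] at h1
      rw [hd, lin_lderiv (hGhom j)] at h2
      obtain ⟨x, hx⟩ := h1
      obtain ⟨y, hy⟩ := h2
      have e : C (c i * eval a (G j) - d i * eval a (F k)) * u ∈ Ideal.span {F k, G j} := by
        refine Ideal.mem_span_pair.2 ⟨C (eval a (G j)) * x, - C (eval a (F k)) * y, ?_⟩
        rw [C_sub, C_mul, C_mul]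
        linear_combination - C (eval a (G j)) * hx + C (eval a (F k)) * hy
      exact (Ideal.unit_mul_mem_iff_mem _ ((isUnit_iff_ne_zero.2 hi).map C)).1 e
  have i2 : genResidual a (∏ k, F k) ⊓ genResidual a (∏ k, G k) ⊓
        Ideal.span {∏ k, F k, ∏ k, G k} ≤ Ideal.span {∏ k, G k} * genResidual a (∏ k, F k) ⊔
            Ideal.span {∏ k, F k} * genResidual a (∏ k, G k) := by
    rintro u ⟨⟨hu1, hu2⟩, hu3⟩
    have hfr : ∀ f : MvPolynomial (Fin (n + 1)) K, f ∈ genResidual a f := fun f =>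
      (mem_genResidual _ _ _).2 fun i => Ideal.mul_mem_right _ _ (Ideal.subset_span (by simp))
    obtain ⟨x, y, hxy⟩ := Ideal.mem_span_pair.1 hu3
    have hy : y ∈ genResidual a (∏ k, F k) := by
      apply hNG
      have : (∏ k, G k) * y = u - x * ∏ k, F k := by linear_combination hxy
      rw [this]
      exact Ideal.sub_mem _ hu1 (Ideal.mul_mem_left _ _ (hfr _))
    have hx : x ∈ genResidual a (∏ k, G k) := by
      apply hNF
      have : (∏ k, F k) * x = u - y * ∏ k, G k := by linear_combination hxy
      rw [this]
      exact Ideal.sub_mem _ hu2 (Ideal.mul_mem_left _ _ (hfr _))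
    rw [← hxy, add_comm (x * _), mul_comm y, mul_comm x]
    exact Submodule.add_mem_sup (Ideal.mul_mem_mul (Ideal.mem_span_singleton_self _) hy)
      (Ideal.mul_mem_mul (Ideal.mem_span_singleton_self _) hx)
  have i3 : Ideal.span {∏ k, G k} * genResidual a (∏ k, F k) ⊔
            Ideal.span {∏ k, F k} * genResidual a (∏ k, G k) ≤
      genResidual a ((∏ k, F k) * ∏ k, G k) := by
    refine sup_le ?_ ?_
    · rw [Ideal.span_singleton_mul_le_iff]
      exact fun z hz => mul_genResidual a hz
    · rw [Ideal.span_singleton_mul_le_iff]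
      intro z hz
      rw [mul_comm (∏ k, F k) (∏ k, G k)]
      exact mul_genResidual a hz
  exact ⟨le_antisymm i1 (i2.trans i3), le_antisymm (i1.trans i2) i3⟩
end

section
/- Let K have characteristic zero and let A be an arrangement of d distinct lines in ℙ² that is a union of disconnected pencils, i.e., setting S₀(A) = {P ∈ S(A) : t_P ≥ 3}, no line of A contains two or more points of S₀(A). Then the arrangement A is free — meaning the Jacobian ideal Jac(f_A) is saturated — if and only if either (a) all d lines of A are concurrent, or (b) d − 1 of the lines of A pass through a common point P and the remaining line does not contain P. Equivalently, if A is a union of disconnected pencils not of type (a) or (b), then Jac(f_A) is not saturated, so A is not free. -/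
open MvPolynomial

/-- The top support `S(A)` of the singular locus of the arrangement defined by the linear
forms `L i`: the (ideals `I_P` of the) points cut out by two distinct lines of the
arrangement. -/
def singSupp {K : Type*} [CommRing K] {m d : ℕ} (L : Fin d → MvPolynomial (Fin m) K) :
    Set (Ideal (MvPolynomial (Fin m) K)) :=
  {I | ∃ i j : Fin d, i ≠ j ∧ I = Ideal.span {L i, L j}}

open Classical in
/-- `t_P`: the number of lines of the arrangement containing `P`. -/
noncomputable def tOf {K : Type*} [CommRing K] {m d : ℕ}
    (L : Fin d → MvPolynomial (Fin m) K) (P : Ideal (MvPolynomial (Fin m) K)) : ℕ :=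
  (Finset.univ.filter (fun i => L i ∈ P)).card


namespace Arr

variable {K : Type*} [Field K]

/-- The linear form with coefficient vector `c`. -/
noncomputable def lin (c : Fin 3 → K) : MvPolynomial (Fin 3) K := ∑ a, C (c a) * X a

/-- The constant-coefficient derivation in direction `v`. -/
noncomputable def D (v : Fin 3 → K) :
    Derivation K (MvPolynomial (Fin 3) K) (MvPolynomial (Fin 3) K) :=
  mkDerivation K (fun a => C (v a))

/-- value of the linear form `c` at `v`. -/
def ev (c v : Fin 3 → K) : K := c 0 * v 0 + c 1 * v 1 + c 2 * v 2

lemma lin_def (c : Fin 3 → K) : lin c = C (c 0) * X 0 + C (c 1) * X 1 + C (c 2) * X 2 := by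
  simp [lin, Fin.sum_univ_three]

lemma eval_lin (c v : Fin 3 → K) : eval v (lin c) = ev c v := by
  simp [lin_def, ev]

lemma D_X (v : Fin 3 → K) (a : Fin 3) : D v (X a) = C (v a) := by
  simp [D, mkDerivation_X]

lemma D_lin (v c : Fin 3 → K) : D v (lin c) = C (ev c v) := by
  simp [lin_def, ev, D_X]

lemma D_eq (v : Fin 3 → K) (f : MvPolynomial (Fin 3) K) :
    D v f = ∑ a, C (v a) * pderiv a f := by
  have : D v = ∑ a, (C (v a) : MvPolynomial (Fin 3) K) • pderiv a := by
    apply derivation_ext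
    intro i
    simp only [D_X, Fin.sum_univ_three, Derivation.add_apply, Derivation.smul_apply, pderiv_X, smul_eq_mul]
    fin_cases i <;> simp
  rw [this]
  simp [Fin.sum_univ_three]

lemma pderiv_eq (a : Fin 3) (f : MvPolynomial (Fin 3) K) :
    pderiv a f = D (Pi.single a 1) f := by
  rw [D_eq]
  simp only [Fin.sum_univ_three]
  fin_cases a <;> simp

lemma D_mem_jac (v : Fin 3 → K) (f : MvPolynomial (Fin 3) K) : D v f ∈ jacobianIdeal f := by
  rw [D_eq]
  exact Ideal.sum_mem _ fun a _ => Ideal.mul_mem_left _ _ (Ideal.subset_span ⟨a, rfl⟩)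

lemma jac_le {f : MvPolynomial (Fin 3) K} {I : Ideal (MvPolynomial (Fin 3) K)}
    (h : ∀ v, D v f ∈ I) : jacobianIdeal f ≤ I := by
  rw [jacobianIdeal, Ideal.span_le]
  rintro _ ⟨a, rfl⟩
  simpa [pderiv_eq] using h _

lemma mem_jac_iff {f h : MvPolynomial (Fin 3) K} :
    h ∈ jacobianIdeal f ↔ ∃ b : Fin 3 → MvPolynomial (Fin 3) K, h = ∑ a, b a * pderiv a f := by
  rw [jacobianIdeal, Ideal.mem_span_range_iff_exists_fun]
  simp [eq_comm]

lemma isHom_lin (c : Fin 3 → K) : (lin c).IsHomogeneous 1 :=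
  IsHomogeneous.sum _ _ _ fun a _ => by
    simpa using (isHomogeneous_C_mul_X (c a) a)

lemma exists_lin {p : MvPolynomial (Fin 3) K} (hp : p.IsHomogeneous 1) : ∃ c, p = lin c := by
  have h := hp.sum_X_mul_pderiv
  refine ⟨fun a => coeff 0 (pderiv a p), ?_⟩
  rw [one_smul] at h
  rw [← h, lin]
  refine Finset.sum_congr rfl fun a _ => ?_
  have h2 : (pderiv a p).IsHomogeneous 0 := hp.pderiv
  rw [← totalDegree_zero_iff_isHomogeneous] at h2
  rw [mul_comm, totalDegree_eq_zero_iff_eq_C.1 h2]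
  simp [h]

lemma lin_ne_zero_iff {c : Fin 3 → K} : lin c ≠ 0 ↔ c ≠ 0 := by
  constructor
  · rintro h rfl; exact h (by simp [lin])
  · rintro h h2
    apply h
    ext a
    have := congrArg (eval (Pi.single a 1)) h2
    rw [eval_lin] at this
    fin_cases a <;> simpa [ev] using this

lemma prime_lin {c : Fin 3 → K} (hc : c ≠ 0) : Prime (lin c) := by
  rw [← irreducible_iff_prime]
  apply irreducible_of_totalDegree_eq_one
  · exact (isHom_lin c).totalDegree (lin_ne_zero_iff.2 hc)
  · intro x hx
    obtain ⟨m, hm⟩ := MvPolynomial.ne_zero_iff.1 (lin_ne_zero_iff.2 hc)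
    have h1 := hx m
    have : x ≠ 0 := by rintro rfl; exact hm (by simpa using h1)
    exact this.isUnit

/-- Cross product and triple product. -/
def cr (c e : Fin 3 → K) : Fin 3 → K :=
  ![c 1 * e 2 - c 2 * e 1, c 2 * e 0 - c 0 * e 2, c 0 * e 1 - c 1 * e 0]

lemma ev_cr_left (c e : Fin 3 → K) : ev c (cr c e) = 0 := by simp [ev, cr]; ring
lemma ev_cr_right (c e : Fin 3 → K) : ev e (cr c e) = 0 := by simp [ev, cr]; ring

lemma cr_ne_zero {c e : Fin 3 → K} (he : e ≠ 0) (h : ∀ t : K, c ≠ t • e) : cr c e ≠ 0 := by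
  intro h0
  obtain ⟨b, hb⟩ := Function.ne_iff.1 he
  have h00 := congrFun h0 0
  have h01 := congrFun h0 1
  have h02 := congrFun h0 2
  simp only [cr, Matrix.cons_val, Pi.zero_apply] at h00 h01 h02 hb
  apply h (c b / e b)
  ext a
  simp only [Pi.smul_apply, smul_eq_mul]
  field_simp
  fin_cases a <;> fin_cases b <;> simp at hb ⊢ <;> grind

lemma triple_id (c1 c2 c3 : Fin 3 → K) (b : Fin 3) :
    C (ev c3 (cr c1 c2)) * X b =
      C (cr c2 c3 b) * lin c1 + C (cr c3 c1 b) * lin c2 + C (cr c1 c2 b) * lin c3 := by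
  fin_cases b <;> simp [lin_def, ev, cr] <;> ring

lemma mem_span_of_ev {c1 c2 c3 : Fin 3 → K} (h : cr c1 c2 ≠ 0) (h3 : ev c3 (cr c1 c2) = 0) :
    lin c3 ∈ Ideal.span {lin c1, lin c2} := by
  obtain ⟨b, hb⟩ := Function.ne_iff.1 h
  have := triple_id c1 c2 c3 b
  rw [h3] at this
  have hu : (C (cr c1 c2 b)⁻¹ : MvPolynomial (Fin 3) K) * C (cr c1 c2 b) = 1 := by
    rw [← C_mul, inv_mul_cancel₀ hb, C_1]
  rw [Ideal.mem_span_pair]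
  refine ⟨- C (cr c1 c2 b)⁻¹ * C (cr c2 c3 b), - C (cr c1 c2 b)⁻¹ * C (cr c3 c1 b), ?_⟩
  simp only [map_zero, zero_mul] at this
  linear_combination C (cr c1 c2 b)⁻¹ * this + (lin c3) * hu

lemma X_mem_of_ev {c1 c2 c3 : Fin 3 → K} (h3 : ev c3 (cr c1 c2) ≠ 0)
    {I : Ideal (MvPolynomial (Fin 3) K)} (m1 : lin c1 ∈ I) (m2 : lin c2 ∈ I) (m3 : lin c3 ∈ I)
    (b : Fin 3) : X b ∈ I := by
  have hu : (C (ev c3 (cr c1 c2))⁻¹ : MvPolynomial (Fin 3) K) * C (ev c3 (cr c1 c2)) = 1 := by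
    rw [← C_mul, inv_mul_cancel₀ h3, C_1]
  have : (X b : MvPolynomial (Fin 3) K) = C (ev c3 (cr c1 c2))⁻¹ *
      (C (cr c2 c3 b) * lin c1 + C (cr c3 c1 b) * lin c2 + C (cr c1 c2 b) * lin c3) := by
    rw [← triple_id, ← mul_assoc, hu, one_mul]
  rw [this]
  exact I.mul_mem_left _ (I.add_mem (I.add_mem (I.mul_mem_left _ m1) (I.mul_mem_left _ m2))
    (I.mul_mem_left _ m3))

lemma exists_dual {c e : Fin 3 → K} (h : cr c e ≠ 0) : ∃ a, ev c a = 1 ∧ ev e a = 0 := by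
  obtain ⟨b, hb⟩ := Function.ne_iff.1 h
  refine ⟨(cr c e b)⁻¹ • cr e (Pi.single b 1), ?_, ?_⟩
  · simp only [Pi.zero_apply] at hb
    refine Eq.trans ?_ (inv_mul_cancel₀ hb)
    generalize (cr c e b)⁻¹ = t
    fin_cases b <;> simp [ev, cr] <;> ring
  · fin_cases b <;> simp [ev, cr] <;> ring

lemma cr_symm_ne {c e : Fin 3 → K} (h : cr c e ≠ 0) : cr e c ≠ 0 := by
  intro h0
  apply h
  ext b
  have := congrFun h0 b
  fin_cases b <;> simp [cr] at this ⊢ <;> linear_combination -this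

lemma not_dvd_lin {c e : Fin 3 → K} (h : cr c e ≠ 0) : ¬ lin c ∣ lin e := by
  rintro ⟨q, hq⟩
  obtain ⟨a, ha, hb⟩ := exists_dual (cr_symm_ne h)
  have := congrArg (eval a) hq
  simp [eval_lin, ha, hb] at this

/-- Every `D v`-iterate eventually kills a polynomial. -/
lemma D_nilp (v : Fin 3 → K) (h : MvPolynomial (Fin 3) K) : ∃ n : ℕ, ∀ m, n ≤ m → (D v)^[m] h = 0 := by
  have hz : ∀ k, (D v)^[k] 0 = 0 := fun k => Function.iterate_fixed (map_zero _) k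
  have hadd : ∀ k p q, (D v)^[k] (p + q) = (D v)^[k] p + (D v)^[k] q := fun k p q =>
    iterate_map_add (D v) k p q
  induction h using MvPolynomial.induction_on with
  | C a =>
    refine ⟨1, fun m hm => ?_⟩
    obtain ⟨k, rfl⟩ := Nat.exists_eq_add_of_le' hm
    rw [Function.iterate_add_apply]
    simp [hz]
  | add p q hp hq =>
    obtain ⟨n, hn⟩ := hp
    obtain ⟨k, hk⟩ := hq
    exact ⟨n + k, fun m hm => by rw [hadd, hn m (by omega), hk m (by omega), add_zero]⟩
  | mul_X p a hp =>
    obtain ⟨n, hn⟩ := hp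
    have key : ∀ m, (D v)^[m+1] (p * X a) =
        (D v)^[m+1] p * X a + ((m : MvPolynomial (Fin 3) K) + 1) * C (v a) * (D v)^[m] p := by
      intro m
      induction m with
      | zero => simp [D_X, Derivation.leibniz]; ring
      | succ m ih =>
        rw [Function.iterate_succ_apply', ih, Function.iterate_succ_apply' _ (m+1),
          Function.iterate_succ_apply' _ m]
        have e : ((m : MvPolynomial (Fin 3) K) + 1) = C ((m : K) + 1) := by simp
        rw [e, ← C_mul]
        simp [Derivation.leibniz, D_X]
        ring
    refine ⟨n + 1, fun m hm => ?_⟩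
    obtain ⟨k, rfl⟩ := Nat.exists_eq_add_of_le' (show 1 ≤ m by omega)
    rw [key, hn _ (by omega), hn _ (by omega)]
    simp

/-- A linear form not vanishing at `q` is a nonzerodivisor modulo a `D q`-stable ideal. -/
lemma mem_of_lin_mul_mem [CharZero K] {I : Ideal (MvPolynomial (Fin 3) K)} {q c : Fin 3 → K}
    (hI : ∀ g ∈ I, D q g ∈ I) (hq : ev c q ≠ 0) {h : MvPolynomial (Fin 3) K}
    (hh : lin c * h ∈ I) : h ∈ I := by
  have key : ∀ m : ℕ, lin c * (D q)^[m+1] h + C (((m : K) + 1) * ev c q) * (D q)^[m] h ∈ I := by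
    intro m
    induction m with
    | zero =>
      have := hI _ hh
      simpa [Derivation.leibniz, D_lin, mul_comm, add_comm] using this
    | succ m ih =>
      have := hI _ ih
      rw [map_add, Derivation.leibniz, Derivation.leibniz, D_lin,
        ← Function.iterate_succ_apply' (D q) (m+1), ← Function.iterate_succ_apply' (D q) m] at this
      convert this using 1
      simp
      ring
  obtain ⟨n, hn⟩ := D_nilp q h
  have : ∀ k, k ≤ n → (D q)^[n - k] h ∈ I := by
    intro k
    induction k with
    | zero => intro _; rw [hn _ (by simp)]; exact I.zero_mem
    | succ k ih =>
      intro hk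
      have h1 := ih (by omega)
      have h2 := key (n - (k+1))
      rw [show n - (k+1) + 1 = n - k by omega] at h2
      have h3 := (Ideal.add_mem_iff_right I (I.mul_mem_left (lin c) h1)).1 h2
      set t : K := (((n - (k+1) : ℕ) : K) + 1) * ev c q with ht
      have ht0 : t ≠ 0 := mul_ne_zero (Nat.cast_add_one_ne_zero _) hq
      have h4 := I.mul_mem_left (C t⁻¹) h3
      rwa [← mul_assoc, ← C_mul, inv_mul_cancel₀ ht0, C_1, one_mul] at h4
  simpa using this n le_rfl

lemma D_comm (v w : Fin 3 → K) (f : MvPolynomial (Fin 3) K) : D v (D w f) = D w (D v f) := by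
  have : ⁅D v, D w⁆ = 0 := by
    apply derivation_ext
    intro i
    simp [Derivation.commutator_apply, D_X]
  have := congrArg (fun E => E f) this
  simpa [Derivation.commutator_apply, sub_eq_zero] using this

lemma jac_stable {q : Fin 3 → K} {f : MvPolynomial (Fin 3) K} (hf : D q f = 0) :
    ∀ g ∈ jacobianIdeal f, D q g ∈ jacobianIdeal f := by
  intro g hg
  obtain ⟨b, rfl⟩ := mem_jac_iff.1 hg
  rw [map_sum]
  refine Ideal.sum_mem _ fun a _ => ?_
  rw [Derivation.leibniz, pderiv_eq, D_comm, hf, map_zero, smul_zero, zero_add, smul_eq_mul]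
  exact Ideal.mul_mem_right _ _ (D_mem_jac _ _)

lemma D_prod_eq_zero {ι : Type*} (s : Finset ι) (c : ι → Fin 3 → K) {q : Fin 3 → K}
    (h : ∀ i ∈ s, ev (c i) q = 0) : D q (∏ i ∈ s, lin (c i)) = 0 := by
  classical
  induction s using Finset.induction_on with
  | empty => simp
  | insert i s hi ih =>
    rw [Finset.prod_insert hi, Derivation.leibniz, D_lin, h i (Finset.mem_insert_self _ _),
      ih fun j hj => h j (Finset.mem_insert_of_mem hj)]
    simp

lemma prod_mem_jac [CharZero K] {ι : Type*} (s : Finset ι) (hs : s.Nonempty)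
    (c : ι → Fin 3 → K) :
    ∏ i ∈ s, lin (c i) ∈ jacobianIdeal (∏ i ∈ s, lin (c i)) := by
  have h1 : (∏ i ∈ s, lin (c i)).IsHomogeneous (∑ _i ∈ s, 1) :=
    IsHomogeneous.prod _ _ _ fun i _ => isHom_lin _
  have h2 := h1.sum_X_mul_pderiv
  rw [Finset.sum_const, smul_eq_mul, mul_one] at h2
  have h3 : (s.card • ∏ i ∈ s, lin (c i)) ∈ jacobianIdeal (∏ i ∈ s, lin (c i)) := by
    rw [← h2]
    exact Ideal.sum_mem _ fun a _ => Ideal.mul_mem_left _ _ (Ideal.subset_span ⟨a, rfl⟩)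
  have hc : (s.card : K) ≠ 0 := by exact_mod_cast hs.card_ne_zero
  have h4 := Ideal.mul_mem_left _ (C (s.card : K)⁻¹) h3
  rwa [nsmul_eq_mul, ← map_natCast C, ← mul_assoc, ← C_mul, inv_mul_cancel₀ hc, C_1, one_mul] at h4


lemma sat_iff (J : Ideal (MvPolynomial (Fin 3) K)) :
    J.colon (Ideal.span (Set.range X) : Ideal (MvPolynomial (Fin 3) K)) = J ↔
      ∀ h, (∀ a, X a * h ∈ J) → h ∈ J := by
  have key : ∀ h, h ∈ J.colon (Ideal.span (Set.range X) : Ideal (MvPolynomial (Fin 3) K)) ↔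
      ∀ a, X a * h ∈ J := by
    intro h
    rw [Submodule.mem_colon]
    constructor
    · intro H a
      have := H (X a) (Ideal.subset_span ⟨a, rfl⟩)
      rwa [smul_eq_mul, mul_comm] at this
    · intro H p hp
      have : (Ideal.span (Set.range X) : Ideal (MvPolynomial (Fin 3) K)) ≤
          J.colon {h} := by
        rw [Ideal.span_le]
        rintro _ ⟨a, rfl⟩
        exact Submodule.mem_colon_singleton.2 (H a)
      have := Submodule.mem_colon_singleton.1 (this hp)
      rwa [smul_eq_mul, mul_comm p h] at this
  constructor
  · intro H h hh
    rw [← H]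
    exact (key h).2 hh
  · intro H
    apply le_antisymm
    · intro h hh
      exact H h ((key h).1 hh)
    · exact Ideal.le_colon

lemma lin_mul_mem {J : Ideal (MvPolynomial (Fin 3) K)} {h : MvPolynomial (Fin 3) K}
    (hh : ∀ a, X a * h ∈ J) (c : Fin 3 → K) : lin c * h ∈ J := by
  rw [lin, Finset.sum_mul]
  refine Ideal.sum_mem _ fun a _ => ?_
  rw [mul_assoc]
  exact J.mul_mem_left _ (hh a)

lemma sat_a [CharZero K] {d : ℕ} (c : Fin d → Fin 3 → K) (q : Fin 3 → K) (hq : q ≠ 0)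
    (h0 : ∀ i, ev (c i) q = 0) {h : MvPolynomial (Fin 3) K}
    (hh : ∀ a, X a * h ∈ jacobianIdeal (∏ i, lin (c i))) :
    h ∈ jacobianIdeal (∏ i, lin (c i)) := by
  obtain ⟨b, hb⟩ := Function.ne_iff.1 hq
  refine mem_of_lin_mul_mem (q := q) (c := Pi.single b 1)
    (jac_stable (D_prod_eq_zero _ _ fun i _ => h0 i)) ?_ (lin_mul_mem hh _)
  fin_cases b <;> simpa [ev] using hb

lemma isRelPrime_lin {c e : Fin 3 → K} (h : cr c e ≠ 0) (hc : c ≠ 0) :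
    IsRelPrime (lin c) (lin e) :=
  ((prime_lin hc).irreducible.isRelPrime_iff_not_dvd).2 (not_dvd_lin h)

lemma sat_b [CharZero K] {d : ℕ} (c : Fin d → Fin 3 → K) (hc0 : ∀ i, c i ≠ 0)
    (hc : ∀ i j, i ≠ j → cr (c i) (c j) ≠ 0) (q : Fin 3 → K) (i₀ : Fin d)
    (hi : ev (c i₀) q ≠ 0)
    (h0 : ∀ i, i ≠ i₀ → ev (c i) q = 0) {h : MvPolynomial (Fin 3) K}
    (hh : ∀ a, X a * h ∈ jacobianIdeal (∏ i, lin (c i))) :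
    h ∈ jacobianIdeal (∏ i, lin (c i)) := by
  classical
  set z := lin (c i₀) with hz
  set s : Finset (Fin d) := Finset.univ.erase i₀ with hs
  set g := ∏ i ∈ s, lin (c i) with hg
  have hf : ∏ i, lin (c i) = z * g := (Finset.mul_prod_erase _ _ (Finset.mem_univ i₀)).symm
  rw [hf] at hh ⊢
  have hsne : ∀ i ∈ s, i ≠ i₀ := fun i hi => Finset.ne_of_mem_erase hi
  clear_value z s g
  have hzreg : ∀ (I : Ideal (MvPolynomial (Fin 3) K)) (k : MvPolynomial (Fin 3) K),
      (∀ g ∈ I, D q g ∈ I) → z * k ∈ I → k ∈ I := by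
    intro I k hI hk
    rw [hz] at hk
    exact mem_of_lin_mul_mem hI hi hk
  have hDg : D q g = 0 := by
    rw [hg]
    exact D_prod_eq_zero _ _ fun i hi => h0 i (hsne i hi)
  have hgJ : g ∈ jacobianIdeal (z * g) := by
    have h1 := D_mem_jac q (z * g)
    rw [Derivation.leibniz, hDg, smul_zero, zero_add, hz, D_lin, smul_eq_mul, ← hz] at h1
    have h2 := Ideal.mul_mem_left _ (C (ev (c i₀) q)⁻¹) h1
    rwa [mul_left_comm, ← C_mul, inv_mul_cancel₀ hi, C_1, mul_one] at h2
  have hzI : ∀ k ∈ jacobianIdeal g, z * k ∈ jacobianIdeal (z * g) := by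
    intro k hk
    have : jacobianIdeal g ≤ (jacobianIdeal (z * g)).colon {z} := by
      apply jac_le
      intro v
      rw [Submodule.mem_colon_singleton, smul_eq_mul]
      have h1 := D_mem_jac v (z * g)
      rw [Derivation.leibniz, hz, D_lin, ← hz, smul_eq_mul, smul_eq_mul] at h1
      have := (Ideal.add_mem_iff_left _ (Ideal.mul_mem_right _ _ hgJ)).1 h1
      rwa [mul_comm (D v g) z]
    have := Submodule.mem_colon_singleton.1 (this hk)
    rwa [smul_eq_mul, mul_comm k z] at this
  rcases s.eq_empty_or_nonempty with he | hne
  · have : g = 1 := by rw [hg, he, Finset.prod_empty]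
    have h2 := Ideal.mul_mem_left _ h hgJ
    have h3 : h * g = h := by rw [this, mul_one]
    rwa [h3] at h2
  have hgI : g ∈ jacobianIdeal g := by
    rw [hg]
    exact prod_mem_jac s hne c
  have hJI : jacobianIdeal (z * g) ≤ jacobianIdeal g := by
    apply jac_le
    intro v
    rw [Derivation.leibniz]
    exact Ideal.add_mem _ (Ideal.mul_mem_left _ _ (D_mem_jac _ _)) (Ideal.mul_mem_right _ _ hgI)
  have hstab := jac_stable hDg
  have hI : h ∈ jacobianIdeal g :=
    by
    have h1 := lin_mul_mem hh (c i₀)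
    rw [← hz] at h1
    exact hzreg _ _ hstab (hJI h1)
  -- the projection
  set t : K := (ev (c i₀) q)⁻¹ with ht
  have htq : ev (c i₀) q * t = 1 := mul_inv_cancel₀ hi
  let π : MvPolynomial (Fin 3) K →ₐ[K] MvPolynomial (Fin 3) K :=
    aeval (fun a => X a - C (q a * t) * z)
  have hπX : ∀ a, π (X a) = X a - C (q a * t) * z := fun a => by simp [π]
  have hπC : ∀ a, π (C a) = C a := fun a => by simp [π]
  have hπl : ∀ e, π (lin e) = lin e - C (ev e q * t) * z := by
    intro e
    rw [lin_def]
    simp only [map_add, map_mul, hπX, hπC, ev]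
    ring
  have hπz : π z = 0 := by
    rw [hz, hπl, htq, C_1, one_mul, hz, sub_self]
  have hπg : π g = g := by
    rw [hg, map_prod]
    refine Finset.prod_congr rfl fun i hi => ?_
    rw [hπl, h0 i (hsne i hi)]
    simp
  have hπh : z ∣ h - π h := by
    have : ∀ p, z ∣ p - π p := by
      intro p
      induction p using MvPolynomial.induction_on with
      | C a => rw [hπC, sub_self]; exact dvd_zero _
      | add p r hp hr =>
        rw [map_add, add_sub_add_comm]; exact dvd_add hp hr
      | mul_X p a hp =>
        rw [map_mul, hπX]
        have : p * X a - π p * (X a - C (q a * t) * z) =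
          (p - π p) * X a + z * (C (q a * t) * π p) := by ring
        rw [this]
        exact dvd_add (hp.mul_right _) (dvd_mul_right _ _)
    exact this h
  have hdvd : ∀ k ∈ jacobianIdeal (z * g), g ∣ π k := by
    intro k hk
    have : jacobianIdeal (z * g) ≤ (Ideal.span {g}).comap π := by
      apply jac_le
      intro v
      rw [Ideal.mem_comap, Ideal.mem_span_singleton, Derivation.leibniz]
      simp only [smul_eq_mul, map_add, map_mul, hπz, hπg, zero_mul, zero_add]
      exact dvd_mul_right _ _
    exact Ideal.mem_span_singleton.1 (this hk)
  have hgπ : g ∣ π h := by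
    rw [hg]
    refine Finset.prod_dvd_of_isRelPrime ?_ ?_
    · intro i _ j _ hij
      exact isRelPrime_lin (hc i j hij) (hc0 i)
    · intro i his
      by_contra hnd
      have hne' : i ≠ i₀ := hsne i his
      have h1 : ∀ a, lin (c i) ∣ π (X a) := by
        intro a
        have h3 := Finset.dvd_prod_of_mem (fun i => lin (c i)) his
        rw [← hg] at h3
        have := h3.trans (hdvd _ (hh a))
        rw [map_mul] at this
        exact ((prime_lin (hc0 i)).dvd_or_dvd this).resolve_right hnd
      apply hc i i₀ hne'
      ext a
      obtain ⟨k, hk⟩ := h1 a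
      have := congrArg (eval (cr (c i) (c i₀))) hk
      rw [hπX] at this
      simpa [eval_lin, ev_cr_left, hz, ev_cr_right] using this
  obtain ⟨k, hk⟩ := hπh
  have hπJ : ∀ J : Ideal (MvPolynomial (Fin 3) K), g ∈ J → π h ∈ J := fun J hJ => J.mem_of_dvd hgπ hJ
  have hzk : z * k ∈ jacobianIdeal g := by
    rw [← hk]; exact Ideal.sub_mem _ hI (hπJ _ hgI)
  have hkI : k ∈ jacobianIdeal g := hzreg _ _ hstab hzk
  have : h = z * k + π h := by rw [← hk]; ring
  rw [this]
  exact Ideal.add_mem _ (hzI k hkI) (hπJ _ hgJ)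


lemma mem_of_sat {J : Ideal (MvPolynomial (Fin 3) K)}
    (hsat : ∀ h, (∀ a, X a * h ∈ J) → h ∈ J) {h : MvPolynomial (Fin 3) K}
    (hp : ∀ p : Ideal (MvPolynomial (Fin 3) K), p.IsPrime → J.colon {h} ≤ p → ∀ a, X a ∈ p) :
    h ∈ J := by
  have hrad : (Ideal.span (Set.range X) : Ideal (MvPolynomial (Fin 3) K)) ≤
      (J.colon {h}).radical := by
    rw [Ideal.radical_eq_sInf, le_sInf_iff]
    rintro p ⟨h1, h2⟩
    rw [Ideal.span_le]
    rintro _ ⟨a, rfl⟩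
    exact hp p h2 h1 a
  obtain ⟨N, hN⟩ := (J.colon {h}).exists_radical_pow_le_of_fg (IsNoetherian.noetherian _)
  have hpow := (Ideal.pow_right_mono hrad N).trans hN
  clear hN hrad hp
  induction N generalizing h with
  | zero =>
    have : (1 : MvPolynomial (Fin 3) K) ∈ J.colon {h} := hpow (by simp)
    simpa [Submodule.mem_colon_singleton] using this
  | succ N ih =>
    apply hsat
    intro a
    apply ih
    intro r hr
    have h1 : r * X a ∈ J.colon {h} := hpow (by
      rw [pow_succ]
      exact Ideal.mul_mem_mul hr (Ideal.subset_span ⟨a, rfl⟩))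
    rw [Submodule.mem_colon_singleton, smul_eq_mul] at h1 ⊢
    rwa [← mul_assoc]

lemma sq_mul_mem [CharZero K] {f g u h : MvPolynomial (Fin 3) K} (hf : f = g * u)
    (hfJ : f ∈ jacobianIdeal f) (hh : h ∈ jacobianIdeal g) : u ^ 2 * h ∈ jacobianIdeal f := by
  have : jacobianIdeal g ≤ (jacobianIdeal f).colon {u ^ 2} := by
    apply jac_le
    intro v
    rw [Submodule.mem_colon_singleton, smul_eq_mul]
    have h1 := Ideal.mul_mem_left _ u (D_mem_jac v f)
    have h2 : D v g * u ^ 2 = u * D v f - f * D v u := by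
      have : D v f = g * D v u + u * D v g := by
        conv_lhs => rw [hf]
        rw [Derivation.leibniz, smul_eq_mul, smul_eq_mul]
      rw [this]
      conv_rhs => rw [hf]
      ring
    rw [h2]
    exact Ideal.sub_mem _ h1 (Ideal.mul_mem_right _ _ hfJ)
  have := Submodule.mem_colon_singleton.1 (this hh)
  rwa [smul_eq_mul, mul_comm h] at this

/-- Sets of lines that behave like a block of a union of disconnected pencils. -/
def IsBlock {d : ℕ} (c : Fin d → Fin 3 → K) (B : Finset (Fin d)) : Prop :=
  ∀ p : Ideal (MvPolynomial (Fin 3) K), p.IsPrime → (∃ a, X a ∉ p) →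
    ∀ T : Finset (Fin d), (∀ i, i ∈ T ↔ lin (c i) ∈ p) → 2 ≤ T.card →
      Disjoint T B ∨ T = B ∨ ∃ k l, k ≠ l ∧ T = {k, l} ∧ l ∉ B

lemma block_mem [CharZero K] {d : ℕ} (hd : 0 < d) (c : Fin d → Fin 3 → K) (hc0 : ∀ i, c i ≠ 0)
    (hc : ∀ i j, i ≠ j → cr (c i) (c j) ≠ 0)
    (hsat : ∀ h, (∀ a, X a * h ∈ jacobianIdeal (∏ i, lin (c i))) →
      h ∈ jacobianIdeal (∏ i, lin (c i))) {B : Finset (Fin d)} (hB : IsBlock c B)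
    (a : Fin 3 → K) :
    (∏ i ∈ Bᶜ, lin (c i)) * D a (∏ i ∈ B, lin (c i)) ∈ jacobianIdeal (∏ i, lin (c i)) := by
  classical
  apply mem_of_sat hsat
  intro p hp hle
  by_contra! hX
  have hfJ : ∏ i, lin (c i) ∈ jacobianIdeal (∏ i, lin (c i)) :=
    prod_mem_jac _ ⟨⟨0, hd⟩, Finset.mem_univ _⟩ c
  set f := ∏ i, lin (c i) with hf
  set h := (∏ i ∈ Bᶜ, lin (c i)) * D a (∏ i ∈ B, lin (c i)) with hh
  let T : Finset (Fin d) := Finset.univ.filter (fun i => lin (c i) ∈ p)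
  have hT : ∀ i, i ∈ T ↔ lin (c i) ∈ p := fun i => by simp [T]
  have hTne : T.Nonempty := by
    have : f ∈ p := hle (Ideal.le_colon hfJ)
    obtain ⟨i, _, hi⟩ := (Ideal.IsPrime.prod_mem_iff (p := p)).1 this
    exact ⟨i, (hT i).2 hi⟩
  have hfu : f = (∏ i ∈ T, lin (c i)) * ∏ i ∈ Tᶜ, lin (c i) :=
    (Finset.prod_mul_prod_compl T _).symm
  have hu : ∏ i ∈ Tᶜ, lin (c i) ∉ p := by
    intro hmem
    obtain ⟨i, hi1, hi2⟩ := (Ideal.IsPrime.prod_mem_iff (p := p)).1 hmem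
    exact (Finset.mem_compl.1 hi1) ((hT i).2 hi2)
  suffices hs : h ∈ jacobianIdeal (∏ i ∈ T, lin (c i)) by
    have h1 := sq_mul_mem hfu hfJ hs
    have h2 : (∏ i ∈ Tᶜ, lin (c i)) ^ 2 ∈ p :=
      hle (Submodule.mem_colon_singleton.2 (by rwa [smul_eq_mul]))
    exact hu (hp.mem_of_pow_mem _ h2)
  have hdual : ∀ k, ∃ w, ev (c k) w = 1 := by
    intro k
    obtain ⟨b, hb⟩ := Function.ne_iff.1 (hc0 k)
    refine ⟨Pi.single b (c k b)⁻¹, ?_⟩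
    fin_cases b <;> simp [ev] at hb ⊢ <;> exact mul_inv_cancel₀ hb
  rcases Nat.lt_or_ge T.card 2 with hlt | hge
  · have h1 : T.card = 1 := by have := hTne.card_pos; omega
    obtain ⟨k, hk⟩ := Finset.card_eq_one.1 h1
    obtain ⟨w, hw⟩ := hdual k
    have h2 := D_mem_jac w (∏ i ∈ T, lin (c i))
    rw [hk, Finset.prod_singleton] at h2 ⊢
    rw [D_lin, hw, C_1] at h2
    have h3 := Ideal.mul_mem_left _ h h2
    rwa [mul_one] at h3
  · rcases hB p hp hX T hT hge with hdis | rfl | ⟨k, l, hkl, hTkl, hlB⟩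
    · apply Ideal.mul_mem_right
      refine Ideal.mem_of_dvd _ ?_ (prod_mem_jac T hTne c)
      exact Finset.prod_dvd_prod_of_subset _ _ _ fun i hi =>
        Finset.mem_compl.2 (Finset.disjoint_left.1 hdis hi)
    · exact Ideal.mul_mem_left _ _ (D_mem_jac _ _)
    · apply Ideal.mul_mem_right
      have hl : lin (c l) ∈ jacobianIdeal (∏ i ∈ T, lin (c i)) := by
        obtain ⟨w, hw1, hw2⟩ := exists_dual (hc k l hkl)
        have h2 := D_mem_jac w (∏ i ∈ T, lin (c i))
        have h3 : D w (∏ i ∈ T, lin (c i)) = lin (c l) := by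
          rw [hTkl, Finset.prod_pair hkl, Derivation.leibniz, D_lin, D_lin, hw1, hw2]
          simp
        rwa [h3] at h2
      exact Ideal.mem_of_dvd _
        (Finset.dvd_prod_of_mem (fun i => lin (c i)) (Finset.mem_compl.2 hlB)) hl

lemma pderiv_lin (a : Fin 3) (c : Fin 3 → K) : pderiv a (lin c) = C (c a) := by
  rw [pderiv_eq, D_lin]
  fin_cases a <;> simp [ev]

lemma extract {d : ℕ} (c : Fin d → Fin 3 → K) (hc0 : ∀ i, c i ≠ 0)
    (hc : ∀ i j, i ≠ j → cr (c i) (c j) ≠ 0) {B : Finset (Fin d)} {a : Fin 3 → K}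
    (hmem : (∏ i ∈ Bᶜ, lin (c i)) * D a (∏ i ∈ B, lin (c i)) ∈
      jacobianIdeal (∏ i, lin (c i))) :
    ∃ v, (∀ i ∈ B, ev (c i) v = ev (c i) a) ∧ ∀ j ∉ B, ev (c j) v = 0 := by
  classical
  obtain ⟨b, hb⟩ := mem_jac_iff.1 hmem
  have key : ∀ i (x : K), lin (c i) ∣ (∏ i ∈ Bᶜ, lin (c i)) * D a (∏ i ∈ B, lin (c i)) -
      C x * ∏ j ∈ Finset.univ.erase i, lin (c j) → ev (c i) (fun k => eval 0 (b k)) = x := by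
    intro i x hdv
    set F := ∏ j ∈ Finset.univ.erase i, lin (c j) with hF
    have hf : ∏ j, lin (c j) = lin (c i) * F :=
      (Finset.mul_prod_erase _ _ (Finset.mem_univ i)).symm
    have h1 : ∑ k, b k * pderiv k (∏ j, lin (c j)) =
        lin (c i) * (∑ k, b k * pderiv k F) + F * ∑ k, b k * C (c i k) := by
      rw [hf, Finset.mul_sum, Finset.mul_sum, ← Finset.sum_add_distrib]
      refine Finset.sum_congr rfl fun k _ => ?_
      rw [pderiv_mul, pderiv_lin]
      ring
    rw [hb, h1] at hdv
    have h2 : lin (c i) ∣ F * (∑ k, b k * C (c i k) - C x) := by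
      have := dvd_sub hdv (dvd_mul_right (lin (c i)) (∑ k, b k * pderiv k F))
      convert this using 1
      ring
    have hF' : ¬ lin (c i) ∣ F := by
      intro h3
      obtain ⟨j, hj, hj2⟩ := (Prime.dvd_finsetProd_iff (prime_lin (hc0 i)) _).1 h3
      exact not_dvd_lin (hc i j (Finset.ne_of_mem_erase hj).symm) hj2
    obtain ⟨k, hk⟩ := ((prime_lin (hc0 i)).dvd_or_dvd h2).resolve_left hF'
    have h4 := congrArg (eval (0 : Fin 3 → K)) hk
    rw [map_mul, eval_lin] at h4
    simp only [Fin.sum_univ_three, map_sub, map_add, map_mul, eval_C] at h4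
    simp only [ev, Pi.zero_apply, mul_zero, add_zero, zero_mul] at h4 ⊢
    linear_combination h4
  refine ⟨fun k => eval 0 (b k), fun i hi => ?_, fun i hi => ?_⟩
  · apply key
    have h1 : ∏ j ∈ B, lin (c j) = lin (c i) * ∏ j ∈ B.erase i, lin (c j) :=
      (Finset.mul_prod_erase _ _ hi).symm
    have h2 : ∏ j ∈ Finset.univ.erase i, lin (c j) =
        (∏ j ∈ B.erase i, lin (c j)) * ∏ j ∈ Bᶜ, lin (c j) := by
      have h3 := Finset.prod_mul_prod_compl B (fun j => lin (c j))
      rw [h1, ← Finset.mul_prod_erase _ _ (Finset.mem_univ i), mul_assoc] at h3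
      exact (mul_left_cancel₀ (prime_lin (hc0 i)).ne_zero h3).symm
    rw [h2, h1, Derivation.leibniz, D_lin, smul_eq_mul, smul_eq_mul]
    refine ⟨(∏ j ∈ Bᶜ, lin (c j)) * D a (∏ j ∈ B.erase i, lin (c j)), ?_⟩
    ring
  · apply key
    rw [map_zero, zero_mul, sub_zero]
    exact (Finset.dvd_prod_of_mem (fun i => lin (c i)) (Finset.mem_compl.2 hi)).mul_right _

lemma prime_mem_iff {d : ℕ} {c : Fin d → Fin 3 → K}
    (hc : ∀ i j, i ≠ j → cr (c i) (c j) ≠ 0) {p : Ideal (MvPolynomial (Fin 3) K)}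
    (hX : ∃ a, X a ∉ p) {i j : Fin d} (hij : i ≠ j) (hi : lin (c i) ∈ p) (hj : lin (c j) ∈ p)
    (k : Fin d) : lin (c k) ∈ p ↔ lin (c k) ∈ Ideal.span {lin (c i), lin (c j)} := by
  constructor
  · intro hk
    apply mem_span_of_ev (hc i j hij)
    by_contra h
    obtain ⟨a, ha⟩ := hX
    exact ha (X_mem_of_ev h hi hj hk a)
  · intro hk
    refine (Ideal.span_le.2 ?_) hk
    rintro x (rfl | rfl) <;> assumption

lemma exists_X_notMem {c e : Fin 3 → K} (h : cr c e ≠ 0) :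
    ∃ a, (X a : MvPolynomial (Fin 3) K) ∉ Ideal.span {lin c, lin e} := by
  by_contra! hX
  apply h
  ext a
  obtain ⟨x, y, hxy⟩ := Ideal.mem_span_pair.1 (hX a)
  have := congrArg (eval (cr c e)) hxy
  simpa [eval_lin, ev_cr_left, ev_cr_right, eq_comm] using this

lemma S0_of_prime {d : ℕ} {c : Fin d → Fin 3 → K}
    (hc : ∀ i j, i ≠ j → cr (c i) (c j) ≠ 0) {p : Ideal (MvPolynomial (Fin 3) K)}
    (hX : ∃ a, X a ∉ p) {T : Finset (Fin d)} (hT : ∀ i, i ∈ T ↔ lin (c i) ∈ p)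
    (h3 : 3 ≤ T.card) {k : Fin d} (hk : k ∈ T) :
    ∃ P : Ideal (MvPolynomial (Fin 3) K), P ∈ singSupp (fun i => lin (c i)) ∧
      3 ≤ tOf (fun i => lin (c i)) P ∧ lin (c k) ∈ P ∧ ∀ i, i ∈ T ↔ lin (c i) ∈ P := by
  classical
  obtain ⟨l, hl, hlk⟩ := Finset.exists_mem_ne (show 1 < T.card by omega) k
  have key := prime_mem_iff hc hX hlk.symm ((hT k).1 hk) ((hT l).1 hl)
  refine ⟨Ideal.span {lin (c k), lin (c l)}, ⟨k, l, hlk.symm, rfl⟩, ?_,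
    Ideal.subset_span (by simp), fun i => (hT i).trans (key i)⟩
  have : T = Finset.univ.filter (fun i => lin (c i) ∈ Ideal.span {lin (c k), lin (c l)}) := by
    ext i
    rw [hT, key]
    simp
  rw [this] at h3
  unfold tOf
  convert h3

lemma block_pencil {d : ℕ} {c : Fin d → Fin 3 → K}
    (hc : ∀ i j, i ≠ j → cr (c i) (c j) ≠ 0)
    (hdisc : ∀ i : Fin d, {P : Ideal (MvPolynomial (Fin 3) K) |
        P ∈ singSupp (fun i => lin (c i)) ∧ 3 ≤ tOf (fun i => lin (c i)) P ∧
          lin (c i) ∈ P}.Subsingleton)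
    {P : Ideal (MvPolynomial (Fin 3) K)} (hP : P ∈ singSupp (fun i => lin (c i)))
    (hP3 : 3 ≤ tOf (fun i => lin (c i)) P) {B : Finset (Fin d)}
    (hB : ∀ i, i ∈ B ↔ lin (c i) ∈ P) : IsBlock c B := by
  classical
  intro p hp hX T hT h2
  by_cases hdis : Disjoint T B
  · exact Or.inl hdis
  right
  obtain ⟨k, hkT, hkB⟩ := Finset.not_disjoint_iff.1 hdis
  rcases Nat.lt_or_ge T.card 3 with hlt | hge
  · obtain ⟨l, hl, hlk⟩ := Finset.exists_mem_ne (show 1 < T.card by omega) k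
    have hTkl : T = {k, l} := by
      symm
      apply Finset.eq_of_subset_of_card_le
      · intro x hx
        rcases Finset.mem_insert.1 hx with rfl | hx
        · exact hkT
        · rwa [Finset.mem_singleton.1 hx]
      · rw [Finset.card_pair hlk.symm]; omega
    by_cases hlB : l ∈ B
    · exfalso
      have hPp : P ≤ p := by
        obtain ⟨i, j, hij, rfl⟩ := hP
        obtain ⟨a, ha⟩ := exists_X_notMem (hc i j hij)
        have key : ∀ m, lin (c m) ∈ Ideal.span {lin (c i), lin (c j)} → lin (c m) ∈ p := by
          intro m hm
          rw [prime_mem_iff hc hX hlk.symm ((hT k).1 hkT) ((hT l).1 hl)]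
          apply mem_span_of_ev (hc k l hlk.symm)
          by_contra hne
          exact ha (X_mem_of_ev hne ((hB k).1 hkB) ((hB l).1 hlB) hm a)
        refine Ideal.span_le.2 ?_
        rintro x (rfl | rfl)
        · exact key i (Ideal.subset_span (by simp))
        · exact key j (Ideal.subset_span (by simp))
      have hsub : B ⊆ T := fun i hi => (hT i).2 (hPp ((hB i).1 hi))
      have hcard : 3 ≤ B.card := by
        have : B = Finset.univ.filter (fun i => lin (c i) ∈ P) := by
          ext i
          rw [hB]
          simp
        rw [this]
        unfold tOf at hP3
        convert hP3
      have := Finset.card_le_card hsub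
      omega
    · exact Or.inr ⟨k, l, hlk.symm, hTkl, hlB⟩
  · left
    obtain ⟨Q, hQ1, hQ2, hQ3, hQ4⟩ := S0_of_prime hc hX hT hge hkT
    have : Q = P := hdisc k ⟨hQ1, hQ2, hQ3⟩ ⟨hP, hP3, (hB k).1 hkB⟩
    subst this
    ext i
    rw [hQ4, hB]

lemma block_single {d : ℕ} {c : Fin d → Fin 3 → K}
    (hc : ∀ i j, i ≠ j → cr (c i) (c j) ≠ 0) {i : Fin d}
    (hi : ∀ P ∈ singSupp (fun i => lin (c i)), 3 ≤ tOf (fun i => lin (c i)) P →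
      lin (c i) ∉ P) : IsBlock c {i} := by
  classical
  intro p hp hX T hT h2
  by_cases hiT : i ∈ T
  · right; right
    rcases Nat.lt_or_ge T.card 3 with hlt | hge
    · obtain ⟨l, hl, hlk⟩ := Finset.exists_mem_ne (show 1 < T.card by omega) i
      refine ⟨i, l, hlk.symm, ?_, by simpa using hlk⟩
      symm
      apply Finset.eq_of_subset_of_card_le
      · intro x hx
        rcases Finset.mem_insert.1 hx with rfl | hx
        · exact hiT
        · rwa [Finset.mem_singleton.1 hx]
      · rw [Finset.card_pair hlk.symm]; omega
    · obtain ⟨Q, hQ1, hQ2, hQ3, hQ4⟩ := S0_of_prime hc hX hT hge hiT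
      exact absurd hQ3 (hi Q hQ1 hQ2)
  · left
    simpa using hiT

lemma no_four {c1 c2 c3 c4 v1 v2 v3 v4 : Fin 3 → K}
    (h1 : ev c1 v1 = 1 ∧ ev c2 v1 = 0 ∧ ev c3 v1 = 0 ∧ ev c4 v1 = 0)
    (h2 : ev c1 v2 = 0 ∧ ev c2 v2 = 1 ∧ ev c3 v2 = 0 ∧ ev c4 v2 = 0)
    (h3 : ev c1 v3 = 0 ∧ ev c2 v3 = 0 ∧ ev c3 v3 = 1 ∧ ev c4 v3 = 0)
    (h4 : ev c1 v4 = 0 ∧ ev c2 v4 = 0 ∧ ev c3 v4 = 0 ∧ ev c4 v4 = 1) : False := by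
  let M : Matrix (Fin 4) (Fin 3) K := Matrix.of ![c1, c2, c3, c4]
  let N : Matrix (Fin 3) (Fin 4) K := (Matrix.of ![v1, v2, v3, v4]).transpose
  have hMN : M * N = 1 := by
    simp only [ev] at h1 h2 h3 h4
    ext i j
    fin_cases i <;> fin_cases j <;>
      simp [M, N, Matrix.mul_apply, Fin.sum_univ_three, h1, h2, h3, h4]
  have := Matrix.rank_mul_le_left M N
  rw [hMN, Matrix.rank_one] at this
  have h5 := Matrix.rank_le_width M
  simp at this
  omega

lemma forward [CharZero K] {d : ℕ} (c : Fin d → Fin 3 → K) (hc0 : ∀ i, c i ≠ 0)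
    (hc : ∀ i j, i ≠ j → cr (c i) (c j) ≠ 0)
    (hdisc : ∀ i : Fin d, {P : Ideal (MvPolynomial (Fin 3) K) |
        P ∈ singSupp (fun i => lin (c i)) ∧ 3 ≤ tOf (fun i => lin (c i)) P ∧
          lin (c i) ∈ P}.Subsingleton)
    (hsat : ∀ h, (∀ a, X a * h ∈ jacobianIdeal (∏ i, lin (c i))) →
      h ∈ jacobianIdeal (∏ i, lin (c i))) :
    (∃ q : Fin 3 → K, q ≠ 0 ∧ ∀ i, ev (c i) q = 0) ∨
      ∃ (q : Fin 3 → K) (i₀ : Fin d), ev (c i₀) q ≠ 0 ∧ ∀ i, i ≠ i₀ → ev (c i) q = 0 := by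
  classical
  rcases Nat.eq_zero_or_pos d with rfl | hd
  · exact Or.inl ⟨fun _ => 1, fun h => one_ne_zero (congrFun h 0), fun i => i.elim0⟩
  by_cases hsing : ∃ i, ∀ P ∈ singSupp (fun i => lin (c i)),
      3 ≤ tOf (fun i => lin (c i)) P → lin (c i) ∉ P
  · right
    obtain ⟨i, hi⟩ := hsing
    obtain ⟨b, hb⟩ := Function.ne_iff.1 (hc0 i)
    obtain ⟨v, hv1, hv2⟩ := extract c hc0 hc
      (block_mem hd c hc0 hc hsat (block_single hc hi) (Pi.single b 1))
    refine ⟨v, i, ?_, fun j hj => hv2 j (by simpa using hj)⟩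
    rw [hv1 i (by simp)]
    fin_cases b <;> simpa [ev] using hb
  · push Not at hsing
    left
    obtain ⟨P, hP, hP3, hPi⟩ := hsing ⟨0, hd⟩
    by_cases hall : ∀ k, lin (c k) ∈ P
    · obtain ⟨i, j, hij, rfl⟩ := hP
      refine ⟨cr (c i) (c j), hc i j hij, fun k => ?_⟩
      obtain ⟨x, y, hxy⟩ := Ideal.mem_span_pair.1 (hall k)
      have := congrArg (eval (cr (c i) (c j))) hxy
      simpa [eval_lin, ev_cr_left, ev_cr_right, eq_comm] using this
    · exfalso
      push Not at hall
      obtain ⟨k, hk⟩ := hall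
      obtain ⟨Q, hQ, hQ3, hQk⟩ := hsing k
      have hdisj : ∀ i, lin (c i) ∈ P → lin (c i) ∉ Q := by
        intro i h1 h2
        have : P = Q := hdisc i ⟨hP, hP3, h1⟩ ⟨hQ, hQ3, h2⟩
        exact hk (this ▸ hQk)
      have ex : ∀ R : Ideal (MvPolynomial (Fin 3) K), R ∈ singSupp (fun i => lin (c i)) →
          3 ≤ tOf (fun i => lin (c i)) R → ∀ a, ∃ v,
            (∀ i, lin (c i) ∈ R → ev (c i) v = ev (c i) a) ∧
            (∀ i, lin (c i) ∉ R → ev (c i) v = 0) := by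
        intro R hR hR3 a
        have hB : ∀ i, i ∈ Finset.univ.filter (fun i => lin (c i) ∈ R) ↔ lin (c i) ∈ R :=
          fun i => by simp
        obtain ⟨v, hv1, hv2⟩ := extract c hc0 hc
          (block_mem hd c hc0 hc hsat (block_pencil hc hdisc hR hR3 hB) a)
        exact ⟨v, fun i hi => hv1 i ((hB i).2 hi), fun i hi => hv2 i (fun h => hi ((hB i).1 h))⟩
      have exP := ex P hP hP3
      have exQ := ex Q hQ hQ3
      have hdisj' : ∀ i, lin (c i) ∈ Q → lin (c i) ∉ P := fun i h1 h2 => hdisj i h2 h1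
      obtain ⟨i, j, hij, hPe⟩ := hP
      obtain ⟨m, n, hmn, hQe⟩ := hQ
      have miP : lin (c i) ∈ P := by rw [hPe]; exact Ideal.subset_span (by simp)
      have mjP : lin (c j) ∈ P := by rw [hPe]; exact Ideal.subset_span (by simp)
      have mmQ : lin (c m) ∈ Q := by rw [hQe]; exact Ideal.subset_span (by simp)
      have mnQ : lin (c n) ∈ Q := by rw [hQe]; exact Ideal.subset_span (by simp)
      obtain ⟨a1, x1, y1⟩ := exists_dual (hc i j hij)
      obtain ⟨a2, x2, y2⟩ := exists_dual (hc j i hij.symm)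
      obtain ⟨a3, x3, y3⟩ := exists_dual (hc m n hmn)
      obtain ⟨a4, x4, y4⟩ := exists_dual (hc n m hmn.symm)
      obtain ⟨v1, p1, q1⟩ := exP a1
      obtain ⟨v2, p2, q2⟩ := exP a2
      obtain ⟨v3, p3, q3⟩ := exQ a3
      obtain ⟨v4, p4, q4⟩ := exQ a4
      have nm := hdisj' m mmQ
      have nn := hdisj' n mnQ
      have ni := hdisj i miP
      have nj := hdisj j mjP
      exact no_four
        ⟨(p1 i miP).trans x1, (p1 j mjP).trans y1, q1 m nm, q1 n nn⟩
        ⟨(p2 i miP).trans y2, (p2 j mjP).trans x2, q2 m nm, q2 n nn⟩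
        ⟨q3 i ni, q3 j nj, (p3 m mmQ).trans x3, (p3 n mnQ).trans y3⟩
        ⟨q4 i ni, q4 j nj, (p4 m mmQ).trans y4, (p4 n mnQ).trans x4⟩

end Arr

open Classical in
/-- Let `K` have characteristic zero and let `A` be an arrangement of
`d` distinct lines in `ℙ²` (given by pairwise non-proportional linear forms `L i` in
`K[x₀,x₁,x₂]`, with `f_A = Π L i`) which is a union of disconnected pencils: no line of
`A` contains two or more points of `S₀(A) = {P ∈ S(A) : t_P ≥ 3}`.  Then `A` is free —
i.e. `Jac(f_A)` is saturated — iff either (a) all `d` lines of `A` are concurrent (pass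
through a common point `q`), or (b) exactly `d − 1` of the lines of `A` pass through a
common point `q` and the remaining line does not contain `q`. -/
theorem stmt_18 {K : Type*} [Field K] [CharZero K] {d : ℕ}
    (L : Fin d → MvPolynomial (Fin 3) K)
    (hhom : ∀ i, (L i).IsHomogeneous 1) (hne : ∀ i, L i ≠ 0)
    (hprop : ∀ i j, i ≠ j → ∀ c : K, L i ≠ c • L j)
    (hdisc : ∀ i : Fin d,
      {P : Ideal (MvPolynomial (Fin 3) K) |
        P ∈ singSupp L ∧ 3 ≤ tOf L P ∧ L i ∈ P}.Subsingleton) :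
    ((jacobianIdeal (∏ i, L i)).colon
        (Ideal.span (Set.range X) : Ideal (MvPolynomial (Fin 3) K)) =
      jacobianIdeal (∏ i, L i)) ↔
    ((∃ q : Fin 3 → K, q ≠ 0 ∧ ∀ i, eval q (L i) = 0) ∨
      (∃ q : Fin 3 → K, q ≠ 0 ∧
        (Finset.univ.filter (fun i => eval q (L i) = 0)).card = d - 1)) := by
  have hex := fun i => Arr.exists_lin (hhom i)
  choose c hcL using hex
  obtain rfl : L = fun i => Arr.lin (c i) := funext hcL
  have hc0 : ∀ i, c i ≠ 0 := fun i => Arr.lin_ne_zero_iff.1 (hne i)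
  have hc : ∀ i j, i ≠ j → Arr.cr (c i) (c j) ≠ 0 := by
    intro i j hij
    apply Arr.cr_ne_zero (hc0 j)
    intro t ht
    apply hprop i j hij t
    simp only [ht, Arr.lin_def, Pi.smul_apply, smul_eq_mul, C_mul, MvPolynomial.smul_eq_C_mul]
    ring
  rw [Arr.sat_iff]
  simp only [Arr.eval_lin]
  constructor
  · intro hsat
    rcases Arr.forward c hc0 hc hdisc hsat with h | ⟨q, i₀, h1, h2⟩
    · exact Or.inl h
    · refine Or.inr ⟨q, ?_, ?_⟩
      · rintro rfl
        exact h1 (by simp [Arr.ev])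
      · have : Finset.univ.filter (fun i => Arr.ev (c i) q = 0) = Finset.univ.erase i₀ := by
          ext i
          simp only [Finset.mem_filter, Finset.mem_univ, true_and, Finset.mem_erase, and_true]
          exact ⟨fun h h' => h1 (h' ▸ h), h2 i⟩
        rw [this, Finset.card_erase_of_mem (Finset.mem_univ _), Finset.card_univ, Fintype.card_fin]
  · rintro (⟨q, hq, h0⟩ | ⟨q, hq, hcard⟩) h hh
    · exact Arr.sat_a c q hq h0 hh
    · by_cases hall : ∀ i, Arr.ev (c i) q = 0
      · exact Arr.sat_a c q hq hall hh
      · push Not at hall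
        obtain ⟨i₀, hi₀⟩ := hall
        refine Arr.sat_b c hc0 hc q i₀ hi₀ ?_ hh
        have hsub : Finset.univ.filter (fun i => Arr.ev (c i) q = 0) = Finset.univ.erase i₀ := by
          apply Finset.eq_of_subset_of_card_le
          · intro i hi
            rw [Finset.mem_erase]
            exact ⟨fun h' => hi₀ (h' ▸ (Finset.mem_filter.1 hi).2), Finset.mem_univ _⟩
          · rw [hcard, Finset.card_erase_of_mem (Finset.mem_univ _), Finset.card_univ,
              Fintype.card_fin]
        intro i hi
        have : i ∈ Finset.univ.erase i₀ := Finset.mem_erase.2 ⟨hi, Finset.mem_univ _⟩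
        rw [← hsub] at this
        exact (Finset.mem_filter.1 this).2
end

section
/- Let K have characteristic zero, n ≥ 2, and S = K[x₀,…,xₙ]. Let ℓ₁, ℓ₂ ∈ S be linearly independent linear forms with xₙ ∉ span_K{ℓ₁, ℓ₂} (i.e., the codimension-two subspace Λ = V(ℓ₁,ℓ₂) is not contained in the hyperplane V(xₙ)). Let g ∈ S be a homogeneous polynomial lying in the K-subalgebra K[ℓ₁,ℓ₂] generated by ℓ₁ and ℓ₂, and let π : S → K[x₀,…,x_{n−1}] be the K-algebra map substituting xₙ ↦ 0 and xᵢ ↦ xᵢ for i < n. Then the ideal of K[x₀,…,x_{n−1}] generated by π(∂g/∂x₀), …, π(∂g/∂xₙ) equals the Jacobian ideal of π(g), i.e. the ideal generated by ∂(π(g))/∂x₀, …, ∂(π(g))/∂x_{n−1}. In other words, the restriction of the Jacobian ideal of g equals the Jacobian ideal of the restriction of g. -/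
open MvPolynomial

/-- The restriction homomorphism `π : K[x₀,…,xₙ] → K[x₀,…,x_{n−1}]` substituting
`xₙ ↦ 0` and `xᵢ ↦ xᵢ` for `i < n`. -/
noncomputable def restrictLast (K : Type*) [CommSemiring K] (n : ℕ) :
    MvPolynomial (Fin (n + 1)) K →ₐ[K] MvPolynomial (Fin n) K :=
  aeval (Fin.lastCases 0 X : Fin (n + 1) → MvPolynomial (Fin n) K)

lemma aux_chain {K : Type*} [Field K] {σ : Type*} (ℓ₁ ℓ₂ g : MvPolynomial σ K)
    (hmem : g ∈ Algebra.adjoin K ({ℓ₁, ℓ₂} : Set (MvPolynomial σ K))) :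
    ∃ G H : MvPolynomial σ K, ∀ i, pderiv i g = pderiv i ℓ₁ * G + pderiv i ℓ₂ * H := by
  induction hmem using Algebra.adjoin_induction with
  | mem x hx =>
    rcases hx with rfl | hx
    · exact ⟨1, 0, fun i => by simp⟩
    · rw [Set.mem_singleton_iff] at hx
      subst hx
      exact ⟨0, 1, fun i => by simp⟩
  | algebraMap r => exact ⟨0, 0, fun i => by simp [MvPolynomial.algebraMap_eq]⟩
  | add x y _ _ hx hy =>
    obtain ⟨a, b, h⟩ := hx
    obtain ⟨c, d, h'⟩ := hy
    exact ⟨a + c, b + d, fun i => by rw [map_add, h, h']; ring⟩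
  | mul x y _ _ hx hy =>
    obtain ⟨a, b, h⟩ := hx
    obtain ⟨c, d, h'⟩ := hy
    exact ⟨a * y + x * c, b * y + x * d, fun i => by rw [pderiv_mul, h, h']; ring⟩

lemma aux_const {K : Type*} [Field K] {σ : Type*} (l : MvPolynomial σ K)
    (h : l.IsHomogeneous 1) (i : σ) : ∃ a : K, pderiv i l = C a := by
  have h0 : (pderiv i l).IsHomogeneous 0 := h.pderiv
  exact ⟨_, (totalDegree_eq_zero_iff_eq_C).1 (Nat.le_zero.1 h0.totalDegree_le)⟩

lemma aux_comm {K : Type*} [Field K] (n : ℕ) (g : MvPolynomial (Fin (n + 1)) K) (i : Fin n) :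
    pderiv i (restrictLast K n g) = restrictLast K n (pderiv i.castSucc g) := by
  induction g using MvPolynomial.induction_on with
  | C a => simp [restrictLast]
  | add p q hp hq => simp only [map_add, hp, hq]
  | mul_X p j hp =>
    rw [map_mul, pderiv_mul, hp, pderiv_mul, map_add, map_mul, map_mul]
    congr 2
    refine Fin.lastCases ?_ (fun j => ?_) j
    · rw [pderiv_X_of_ne (Fin.castSucc_lt_last i).ne']
      simp [restrictLast]
    · by_cases hij : j = i
      · subst hij; simp [restrictLast]
      · rw [pderiv_X_of_ne (by simpa using hij)]
        simp [restrictLast, pderiv_X_of_ne hij]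

/-- Let `K` have characteristic zero, `n ≥ 2`, and
`S = K[x₀,…,xₙ]`.  Let `ℓ₁, ℓ₂ ∈ S` be linearly independent linear forms with
`xₙ ∉ span_K{ℓ₁, ℓ₂}`.  Let `g ∈ S` be a homogeneous polynomial lying in the
`K`-subalgebra `K[ℓ₁,ℓ₂]` generated by `ℓ₁` and `ℓ₂`, and let
`π : S → K[x₀,…,x_{n−1}]` substitute `xₙ ↦ 0`.  Then the ideal generated by
`π(∂g/∂x₀), …, π(∂g/∂xₙ)` equals the Jacobian ideal of `π(g)`, i.e. the ideal generated
by `∂(π(g))/∂x₀, …, ∂(π(g))/∂x_{n−1}`: the restriction of the Jacobian ideal of `g`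
equals the Jacobian ideal of the restriction of `g`. -/
theorem stmt_19 {K : Type*} [Field K] [CharZero K] {n : ℕ} (hn : 2 ≤ n)
    (ℓ₁ ℓ₂ : MvPolynomial (Fin (n + 1)) K)
    (h1 : ℓ₁.IsHomogeneous 1) (h2 : ℓ₂.IsHomogeneous 1)
    (hindep : LinearIndependent K ![ℓ₁, ℓ₂])
    (hlast : X (Fin.last n) ∉
      Submodule.span K ({ℓ₁, ℓ₂} : Set (MvPolynomial (Fin (n + 1)) K)))
    (g : MvPolynomial (Fin (n + 1)) K) (e : ℕ) (hg : g.IsHomogeneous e)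
    (hmem : g ∈ Algebra.adjoin K ({ℓ₁, ℓ₂} : Set (MvPolynomial (Fin (n + 1)) K))) :
    Ideal.span (Set.range fun i : Fin (n + 1) =>
        restrictLast K n (pderiv i g)) =
      Ideal.span (Set.range fun i : Fin n =>
        pderiv i (restrictLast K n g)) := by
  obtain ⟨G, H, hGH⟩ := aux_chain ℓ₁ ℓ₂ g hmem
  choose a ha using aux_const ℓ₁ h1
  choose b hb using aux_const ℓ₂ h2
  have hspan : ((a (Fin.last n), b (Fin.last n)) : K × K) ∈
      Submodule.span K (Set.range fun i : Fin n => ((a i.castSucc, b i.castSucc) : K × K)) := by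
    by_contra hc
    obtain ⟨f, hf, hle⟩ := Submodule.exists_le_ker_of_notMem hc
    have hfe : ∀ x y : K, f (x, y) = x * f (1, 0) + y * f (0, 1) := by
      intro x y
      have : ((x, y) : K × K) = x • (1, 0) + y • (0, 1) := by simp
      rw [this, map_add, map_smul, map_smul, smul_eq_mul, smul_eq_mul]
    have hz : ∀ i : Fin n, f (a i.castSucc, b i.castSucc) = 0 := fun i =>
      hle (Submodule.subset_span ⟨i, rfl⟩)
    have e1 := h1.sum_X_mul_pderiv
    have e2 := h2.sum_X_mul_pderiv
    simp only [ha, hb, one_smul] at e1 e2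
    have key : f (1, 0) • ℓ₁ + f (0, 1) • ℓ₂ =
        f (a (Fin.last n), b (Fin.last n)) • X (Fin.last n) := by
      have : f (1, 0) • ℓ₁ + f (0, 1) • ℓ₂ = ∑ i, f (a i, b i) • X i := by
        rw [← e1, ← e2, Finset.smul_sum, Finset.smul_sum, ← Finset.sum_add_distrib]
        refine Finset.sum_congr rfl fun i _ => ?_
        rw [hfe (a i) (b i)]
        simp only [smul_eq_C_mul, map_add, map_mul]
        ring
      rw [this, Fin.sum_univ_castSucc]
      simp [hz]
    apply hlast
    have : X (Fin.last n) = (f (a (Fin.last n), b (Fin.last n)))⁻¹ •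
        (f (1, 0) • ℓ₁ + f (0, 1) • ℓ₂) := by
      rw [key, smul_smul, inv_mul_cancel₀ hf, one_smul]
    rw [this]
    exact Submodule.smul_mem _ _ (Submodule.add_mem _
      (Submodule.smul_mem _ _ (Submodule.subset_span (by simp)))
      (Submodule.smul_mem _ _ (Submodule.subset_span (by simp))))
  obtain ⟨c, hc⟩ := (Submodule.mem_span_range_iff_exists_fun K).1 hspan
  have hca : ∑ i, c i * a i.castSucc = a (Fin.last n) := by
    have := congrArg Prod.fst hc
    simpa [Prod.fst_sum] using this
  have hcb : ∑ i, c i * b i.castSucc = b (Fin.last n) := by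
    have := congrArg Prod.snd hc
    simpa [Prod.snd_sum] using this
  apply le_antisymm
  · rw [Ideal.span_le]
    rintro _ ⟨i, rfl⟩
    refine Fin.lastCases ?_ (fun j => ?_) i
    · have : restrictLast K n (pderiv (Fin.last n) g) =
          ∑ i, C (c i) * pderiv i (restrictLast K n g) := by
        have hC : ∀ r : K, restrictLast K n (C r) = C r := fun r => by simp [restrictLast]
        simp only [aux_comm, hGH, ha, hb, map_add, map_mul, hC]
        rw [← hca, ← hcb, map_sum, map_sum, Finset.sum_mul, Finset.sum_mul,
          ← Finset.sum_add_distrib]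
        refine Finset.sum_congr rfl fun i _ => ?_
        simp only [map_mul]
        ring
      simp only [SetLike.mem_coe]
      rw [this]
      exact Ideal.sum_mem _ fun i _ => Ideal.mul_mem_left _ _ (Ideal.subset_span ⟨i, rfl⟩)
    · exact Ideal.subset_span ⟨j, aux_comm n g j⟩
  · rw [Ideal.span_le]
    rintro _ ⟨i, rfl⟩
    exact Ideal.subset_span ⟨i.castSucc, (aux_comm n g i).symm⟩
end
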